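/- arXiv:2009.09221 — 6 statements merged into one kernel-verified Lean document; each statement's English description precedes it below -/
import Mathlib

section
/- Let G be a countably infinite, locally finite, strongly connected directed graph, let H be a horoball in G and let v ∈ H. Then there exists a Busemann ball B in G with v ∈ B ⊆ H. -/
/-!
Let `v ∈ H`, where `H` is the limit of the balls of radius `n i` around `c i`, and let `m i` be the
distance from `c i` to `v`. Eventually `m i ≤ n i`, and since `H` misses some vertex, `m i → ∞`.
The ray is obtained from `γ 0 = v` by a compactness argument applied to geodesics from `c i` to `v`:
along a fixed nonprincipal ultrafilter on the indices `i`, one keeps the invariant that `γ r` lies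
in the ball of radius `m i - r` around `c i`. A vertex with this invariant has an in-neighbor with
the next one, because it has finitely many in-neighbors and an ultrafilter singles out one of
finitely many alternatives (`exists_prev`).

The minimality of `m i` turns the invariant into geodesicity of `γ`, while the triangle inequality
puts `φ_G^r {γ r}` inside the ball of radius `m i ≤ n i` around `c i`, hence inside `H`.
-/

open Filter Set

/-- The map `φ_G` on subsets of the vertex set of a directed graph with edge
relation `E`: `φ_G(W) = W ∪ {v : ∃ w ∈ W, (w,v) ∈ E}`. -/
def phiG {V : Type*} (E : V → V → Prop) (W : Set V) : Set V :=
  W ∪ {v | ∃ w ∈ W, E w v}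

/-- A directed graph is locally finite if every vertex has finitely many
out-neighbors and finitely many in-neighbors. -/
def LocallyFiniteGraph {V : Type*} (E : V → V → Prop) : Prop :=
  ∀ v : V, {w | E v w}.Finite ∧ {w | E w v}.Finite

/-- A directed graph is strongly connected if every vertex is reachable from
every other vertex by a directed path. -/
def StronglyConnectedGraph {V : Type*} (E : V → V → Prop) : Prop :=
  ∀ v w : V, ∃ n : ℕ, w ∈ (phiG E)^[n] {v}

/-- Convergence of a sequence of subsets in the product topology on
`{0,1}^V`: for every vertex, membership eventually agrees with the limit. -/
def ConvergesTo {V : Type*} (s : ℕ → Set V) (S : Set V) : Prop :=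
  ∀ v : V, ∀ᶠ i in atTop, (v ∈ s i ↔ v ∈ S)

/-- A horoball: a nonempty proper subset of `V` which is a limit of balls
`φ_G^{n_i}({c_i})` with radii `n_i → ∞`. -/
def IsHoroball {V : Type*} (E : V → V → Prop) (H : Set V) : Prop :=
  H.Nonempty ∧ H ≠ univ ∧
    ∃ (c : ℕ → V) (n : ℕ → ℕ), Tendsto n atTop atTop ∧
      ConvergesTo (fun i => (phiG E)^[n i] {c i}) H

/-- A geodesic ray: a sequence `γ` of vertices such that for `i > j` the
shortest directed path from `γ i` to `γ j` has length exactly `i - j`. -/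
def IsGeodesicRay {V : Type*} (E : V → V → Prop) (γ : ℕ → V) : Prop :=
  ∀ i j : ℕ, j < i →
    γ j ∈ (phiG E)^[i - j] {γ i} ∧ ∀ n : ℕ, γ j ∈ (phiG E)^[n] {γ i} → i - j ≤ n

/-- A Busemann ball: a set of the form `⋃ r, φ_G^r({γ r})` for a geodesic ray
`γ`, which is neither empty nor the whole vertex set. -/
def IsBusemannBall {V : Type*} (E : V → V → Prop) (B : Set V) : Prop :=
  B ≠ ∅ ∧ B ≠ univ ∧
    ∃ γ : ℕ → V, IsGeodesicRay E γ ∧ B = ⋃ r : ℕ, (phiG E)^[r] {γ r}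

lemma phiG_mono {V : Type*} (E : V → V → Prop) : Monotone (phiG E) := by
  rintro A B h x (hx | ⟨w, hw, hwx⟩)
  · exact Or.inl (h hx)
  · exact Or.inr ⟨w, h hw, hwx⟩

lemma phiG_iterate_le {V : Type*} (E : V → V → Prop) (W : Set V) {a b : ℕ} (h : a ≤ b) :
    (phiG E)^[a] W ⊆ (phiG E)^[b] W :=
  Function.monotone_iterate_of_id_le (fun _ => subset_union_left) h W

/-- The triangle inequality for the directed distance, in terms of balls. -/
lemma phiG_trans {V : Type*} (E : V → V → Prop) {x y z : V} {a b : ℕ}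
    (hy : y ∈ (phiG E)^[a] {x}) (hz : z ∈ (phiG E)^[b] {y}) :
    z ∈ (phiG E)^[b + a] {x} := by
  rw [Function.iterate_add_apply]
  exact (phiG_mono E).iterate b (singleton_subset_iff.2 hy) hz

/-- Backward step of the ray: if `x` lies in the ball of radius `k i + 1` around `c i` for
`U`-almost all `i`, then a single `y` within distance one before `x` lies in the ball of radius
`k i` around `c i` for `U`-almost all `i`. -/
lemma exists_prev {V : Type*} (E : V → V → Prop) (hLF : LocallyFiniteGraph E)
    (U : Ultrafilter ℕ) (c : ℕ → V) (k : ℕ → ℕ) (x : V)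
    (h : ∀ᶠ i in U, x ∈ (phiG E)^[k i + 1] {c i}) :
    ∃ y, x ∈ phiG E {y} ∧ ∀ᶠ i in U, y ∈ (phiG E)^[k i] {c i} := by
  have hfin : (insert x {w | E w x}).Finite := (hLF x).2.insert x
  have key : (⋃ y ∈ insert x {w | E w x}, {i | y ∈ (phiG E)^[k i] {c i}}) ∈ U := by
    filter_upwards [h] with i hi
    rw [Function.iterate_succ_apply'] at hi
    simp only [mem_iUnion]
    rcases hi with hi | ⟨w, hw, hwx⟩
    · exact ⟨x, mem_insert _ _, hi⟩
    · exact ⟨w, mem_insert_of_mem _ hwx, hw⟩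
  obtain ⟨y, hy, hyU⟩ := (Ultrafilter.finite_biUnion_mem_iff hfin).1 key
  refine ⟨y, ?_, hyU⟩
  rcases hy with rfl | hy
  · exact Or.inl rfl
  · exact Or.inr ⟨y, rfl, hy⟩

/-- Every point of a horoball is contained in a Busemann ball contained in the
horoball. -/
theorem busemann_ball_in_horoball {V : Type*} [Countable V] [Infinite V]
    (E : V → V → Prop) (hLF : LocallyFiniteGraph E)
    (hSC : StronglyConnectedGraph E)
    (H : Set V) (hH : IsHoroball E H) (v : V) (hv : v ∈ H) :
    ∃ B : Set V, IsBusemannBall E B ∧ v ∈ B ∧ B ⊆ H := by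
  classical
  obtain ⟨-, hne, c, n, hn, hconv⟩ := hH
  obtain ⟨w, hw⟩ := (ne_univ_iff_exists_notMem H).1 hne
  obtain ⟨D, hD⟩ := hSC v w
  -- `m i` is the distance from `c i` to `v`
  choose m hm hmin using fun i => (⟨Nat.find (hSC (c i) v), Nat.find_spec (hSC (c i) v),
    fun _ hk => Nat.find_min' (hSC (c i) v) hk⟩ :
    ∃ m, v ∈ (phiG E)^[m] {c i} ∧ ∀ k, v ∈ (phiG E)^[k] {c i} → m ≤ k)
  let U : Ultrafilter ℕ := hyperfilter ℕ
  have hU : (U : Filter ℕ) ≤ atTop := Nat.hyperfilter_le_atTop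
  have hmn : ∀ᶠ i in U, m i ≤ n i := by
    filter_upwards [hU (hconv v)] with i hi
    exact hmin i _ (hi.2 hv)
  have hlarge : ∀ r, ∀ᶠ i in U, r ≤ m i := by
    intro r
    filter_upwards [hU (hconv w), hU (hn.eventually_ge_atTop (r + D))] with i hi hri
    by_contra hlt
    -- otherwise `w` is within `D + m i ≤ n i` of `c i`, although `w ∉ H`
    exact hw (hi.1 (phiG_iterate_le E _ (by omega) (phiG_trans E (hm i) hD)))
  have step : ∀ r x, (∀ᶠ i in U, x ∈ (phiG E)^[m i - r] {c i}) →
      ∃ y, x ∈ phiG E {y} ∧ ∀ᶠ i in U, y ∈ (phiG E)^[m i - (r + 1)] {c i} := by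
    intro r x hx
    apply exists_prev E hLF U c _ x
    filter_upwards [hx, hlarge (r + 1)] with i hi hr
    rwa [show m i - (r + 1) + 1 = m i - r by omega]
  choose! f hf hf' using step
  let γ : ℕ → V := fun r => Nat.rec v (fun r x => f r x) r
  have hγ : ∀ r, ∀ᶠ i in U, γ r ∈ (phiG E)^[m i - r] {c i} := by
    intro r
    induction r with
    | zero => exact Eventually.of_forall hm
    | succ r ih => exact hf' r (γ r) ih
  have hpath : ∀ j k, γ j ∈ (phiG E)^[k] {γ (j + k)} := by
    intro j k
    induction k with
    | zero => exact rfl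
    | succ k ih =>
      exact phiG_trans E (a := 1) (hf (j + k) (γ (j + k)) (hγ _)) ih
  have hsub : (⋃ r : ℕ, (phiG E)^[r] {γ r}) ⊆ H := by
    intro u hu
    obtain ⟨r, hr⟩ := mem_iUnion.1 hu
    obtain ⟨i, h1, h2, h3, h4⟩ :=
      ((hγ r).and ((hlarge r).and (hmn.and (hU (hconv u))))).exists
    exact h4.1 (phiG_iterate_le E _ (by omega) (phiG_trans E h1 hr))
  have hvB : v ∈ ⋃ r : ℕ, (phiG E)^[r] {γ r} := mem_iUnion.2 ⟨0, rfl⟩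
  refine ⟨_, ⟨nonempty_iff_ne_empty.1 ⟨v, hvB⟩, fun h => hw (hsub (h ▸ mem_univ w)),
    γ, ?_, rfl⟩, hvB, hsub⟩
  intro i j hij
  refine ⟨?_, fun k hk => ?_⟩
  · have := hpath j (i - j)
    rwa [show j + (i - j) = i by omega] at this
  · -- a shortcut from `γ i` to `γ j` would give a path from `c l` to `v` shorter than `m l`
    obtain ⟨l, h1, h2⟩ := ((hγ i).and (hlarge i)).exists
    have h0 : v ∈ (phiG E)^[j] {γ j} := by simpa [γ] using hpath 0 j
    have := hmin l _ (phiG_trans E h1 (phiG_trans E hk h0))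
    omega
end

section
/- Let G be a countably infinite, locally finite, strongly connected directed graph and let M ⊆ V(G) be nonempty with M ≠ V(G). Then the following are equivalent: (1) M lies in the eventual image ⋂_{n≥1} φ_G^n(𝒫(V(G))); (2) for every r ∈ ℕ there is M' ⊆ M with M = φ_G^r(M'); (3) M is a union of horoballs in G; (4) M is a union of Busemann balls in G. -/
/-!
Write `B n w = φ^n {w}` for the ball of radius `n` at `w`. Since `φ^n` commutes with unions and
is extensive, both (1) and (2) say that for every `r`, each `v ∈ M` lies in some ball `B r u`
contained in `M` (`eq_iterate_iff`).

A Busemann ball is an increasing union of the balls `B r (γ r)`, hence a horoball, so (4) implies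
(3). For a horoball `H = lim B (n i) (c i)` and `v ∈ H`, each large ball of the sequence that
contains `v` contains some `B r u` with `v ∈ B r u`; only finitely many `u` are possible, so one
`u` occurs infinitely often and `B r u ⊆ H`. Thus (3) implies (2).

For (2) implies (4), fix `v ∈ M` and `x ∉ M`. If `v ∈ B r u ⊆ M`, then the distance from `u` to `x`
exceeds `r`, so the distance from `u` to `v` is at least `r` minus the distance from `v` to `x`.
Hence `M` contains balls of arbitrarily large radius with `v` on their boundary sphere. Following
shortest paths to `v` from the centres of these balls, a König argument (`DeepVertex.exists_step`)
gives a geodesic ray `γ` with `γ 0 = v` and `B i (γ i) ⊆ M` for all `i`; its Busemann ball contains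
`v` and lies in `M`.
-/

open Filter Set

section Balls

variable {V : Type*} {E : V → V → Prop}

lemma subset_phiG (W : Set V) : W ⊆ phiG E W := subset_union_left

lemma phiG_mono_s1 {W W' : Set V} (h : W ⊆ W') : phiG E W ⊆ phiG E W' := by
  rintro v (hv | ⟨w, hw, hwv⟩)
  · exact Or.inl (h hv)
  · exact Or.inr ⟨w, h hw, hwv⟩

lemma iterate_phiG_mono (n : ℕ) {W W' : Set V} (h : W ⊆ W') :
    (phiG E)^[n] W ⊆ (phiG E)^[n] W' := by
  induction n with
  | zero => exact h
  | succ n ih =>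
    rw [Function.iterate_succ_apply', Function.iterate_succ_apply']
    exact phiG_mono_s1 ih

lemma iterate_phiG_le {m n : ℕ} (h : m ≤ n) (W : Set V) :
    (phiG E)^[m] W ⊆ (phiG E)^[n] W := by
  induction n, h using Nat.le_induction with
  | base => exact Subset.rfl
  | succ n _ ih =>
    rw [Function.iterate_succ_apply']
    exact ih.trans (subset_phiG _)

lemma mem_iterate_phiG_iff (n : ℕ) (W : Set V) (v : V) :
    v ∈ (phiG E)^[n] W ↔ ∃ w ∈ W, v ∈ (phiG E)^[n] {w} := by
  constructor
  · induction n generalizing v with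
    | zero => intro h; exact ⟨v, h, rfl⟩
    | succ n ih =>
      simp only [Function.iterate_succ_apply']
      rintro (hv | ⟨u, hu, huv⟩)
      · obtain ⟨w, hw, h⟩ := ih v hv
        exact ⟨w, hw, Or.inl h⟩
      · obtain ⟨w, hw, h⟩ := ih u hu
        exact ⟨w, hw, Or.inr ⟨u, h, huv⟩⟩
  · rintro ⟨w, hw, h⟩
    exact iterate_phiG_mono n (singleton_subset_iff.2 hw) h

lemma mem_ball_add_iff (a b : ℕ) (w v : V) :
    v ∈ (phiG E)^[a + b] {w} ↔ ∃ u ∈ (phiG E)^[a] {w}, v ∈ (phiG E)^[b] {u} := by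
  rw [add_comm, Function.iterate_add_apply, mem_iterate_phiG_iff]

lemma ball_subset_ball {a b : ℕ} {w u : V} (h : u ∈ (phiG E)^[a] {w}) :
    (phiG E)^[b] {u} ⊆ (phiG E)^[a + b] {w} :=
  fun _ hv => (mem_ball_add_iff a b w _).2 ⟨u, h, hv⟩

lemma finite_inBall (hLF : LocallyFiniteGraph E) (n : ℕ) (v : V) :
    {u | v ∈ (phiG E)^[n] {u}}.Finite := by
  induction n generalizing v with
  | zero =>
    refine (finite_singleton v).subset fun u hu => ?_
    exact (mem_singleton_iff.1 hu).symm
  | succ n ih =>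
    refine ((ih v).union ((hLF v).2.biUnion fun w _ => ih w)).subset fun u hu => ?_
    rw [mem_ofPred_eq, Function.iterate_succ_apply'] at hu
    rcases hu with hu | ⟨w, hw, hwv⟩
    · exact Or.inl hu
    · exact Or.inr (mem_biUnion (show w ∈ {w | E w v} from hwv) hw)

/-- A set is a value of `φ^r` exactly when it is a union of balls of radius `r`. -/
lemma eq_iterate_iff (r : ℕ) (M : Set V) :
    (∃ M' ⊆ M, M = (phiG E)^[r] M') ↔
      ∀ v ∈ M, ∃ u, v ∈ (phiG E)^[r] {u} ∧ (phiG E)^[r] {u} ⊆ M := by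
  constructor
  · rintro ⟨M', -, rfl⟩ v hv
    obtain ⟨u, hu, h⟩ := (mem_iterate_phiG_iff r M' v).1 hv
    exact ⟨u, h, iterate_phiG_mono r (singleton_subset_iff.2 hu)⟩
  · intro h
    refine ⟨{u | (phiG E)^[r] {u} ⊆ M},
      fun u hu => hu (iterate_phiG_le (Nat.zero_le r) {u} rfl), Subset.antisymm ?_ ?_⟩
    · intro v hv
      obtain ⟨u, hu, hM⟩ := h v hv
      exact (mem_iterate_phiG_iff _ _ _).2 ⟨u, hM, hu⟩
    · intro v hv
      obtain ⟨u, hM, hu⟩ := (mem_iterate_phiG_iff _ _ _).1 hv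
      exact hM hu

lemma IsBusemannBall.isHoroball {B : Set V} (h : IsBusemannBall E B) : IsHoroball E B := by
  obtain ⟨hne, huniv, γ, hγ, rfl⟩ := h
  refine ⟨nonempty_iff_ne_empty.2 hne, huniv, γ, id, tendsto_id, fun v => ?_⟩
  by_cases hv : v ∈ ⋃ r : ℕ, (phiG E)^[r] {γ r}
  · obtain ⟨r, hr⟩ := mem_iUnion.1 hv
    filter_upwards [eventually_gt_atTop r] with i hi
    refine iff_of_true ?_ hv
    have := ball_subset_ball (b := r) (hγ i r hi).1 hr
    rwa [Nat.sub_add_cancel hi.le] at this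
  · exact Eventually.of_forall fun i => iff_of_false (fun h => hv (mem_iUnion.2 ⟨i, h⟩)) hv

lemma IsHoroball.exists_ball_subset (hLF : LocallyFiniteGraph E) {H : Set V}
    (h : IsHoroball E H) (r : ℕ) {v : V} (hv : v ∈ H) :
    ∃ u, v ∈ (phiG E)^[r] {u} ∧ (phiG E)^[r] {u} ⊆ H := by
  obtain ⟨-, -, c, n, hn, hc⟩ := h
  have key : ∀ᶠ i in atTop, ∃ u ∈ {u | v ∈ (phiG E)^[r] {u}},
      (phiG E)^[r] {u} ⊆ (phiG E)^[n i] {c i} := by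
    filter_upwards [hc v, hn.eventually_ge_atTop r] with i hi hr
    have hvi := hi.2 hv
    rw [← Nat.sub_add_cancel hr] at hvi ⊢
    obtain ⟨u, hu, hvu⟩ := (mem_ball_add_iff _ _ _ _).1 hvi
    exact ⟨u, hvu, ball_subset_ball hu⟩
  -- Pigeonhole: one centre `u` of the finitely many candidates works infinitely often.
  have hfreq : ∃ u ∈ {u | v ∈ (phiG E)^[r] {u}},
      ∃ᶠ i in atTop, (phiG E)^[r] {u} ⊆ (phiG E)^[n i] {c i} := by
    by_contra! hcon
    have hall : ∀ᶠ i in atTop, ∀ u ∈ {u | v ∈ (phiG E)^[r] {u}},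
        ¬ (phiG E)^[r] {u} ⊆ (phiG E)^[n i] {c i} :=
      (eventually_all_finite (finite_inBall hLF r v)).2 fun u hu => by
        simpa [not_frequently] using hcon u hu
    obtain ⟨i, ⟨u, hu, hs⟩, hi⟩ := (key.and hall).exists
    exact hi u hu hs
  obtain ⟨u, hu, hfr⟩ := hfreq
  refine ⟨u, hu, fun w hw => ?_⟩
  obtain ⟨i, hi, hwi⟩ := (hfr.and_eventually (hc w)).exists
  exact hwi.1 (hi hw)

end Balls

section Konig

variable {V : Type*} {E : V → V → Prop}

/-- `DeepVertex E M v u i` says that for arbitrarily large `k` there is a vertex `w` whose distance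
to `v` is at least `k + i`, whose ball of radius `k + i` lies in `M`, and from which `u` can be
reached in `k` steps. When `v` is reachable from `u` in `i` steps, this makes `u` a vertex at
distance `i` from `v` on arbitrarily long geodesics to `v`. -/
def DeepVertex (E : V → V → Prop) (M : Set V) (v u : V) (i : ℕ) : Prop :=
  ∀ N : ℕ, ∃ k ≥ N, ∃ w, u ∈ (phiG E)^[k] {w} ∧ (phiG E)^[k + i] {w} ⊆ M ∧
    ∀ n, v ∈ (phiG E)^[n] {w} → k + i ≤ n

lemma DeepVertex.le {M : Set V} {v u : V} {i n : ℕ} (h : DeepVertex E M v u i)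
    (hv : v ∈ (phiG E)^[n] {u}) : i ≤ n := by
  obtain ⟨k, -, w, hu, -, hmin⟩ := h 0
  have := hmin _ (ball_subset_ball hu hv)
  omega

lemma DeepVertex.ball_subset {M : Set V} {v u : V} {i : ℕ} (h : DeepVertex E M v u i) :
    (phiG E)^[i] {u} ⊆ M := by
  obtain ⟨k, -, w, hu, hM, -⟩ := h 0
  exact (ball_subset_ball hu).trans hM

/-- The König step: only finitely many vertices reach `u` in at most one step, so one of them is the
predecessor of `u` on paths from centres `w` with arbitrarily large `k`. -/
lemma DeepVertex.exists_step (hLF : LocallyFiniteGraph E) {M : Set V} {v u : V} {i : ℕ}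
    (h : DeepVertex E M v u i) :
    ∃ u', u ∈ (phiG E)^[1] {u'} ∧ DeepVertex E M v u' (i + 1) := by
  by_contra! hcon
  have hN : ∀ u' ∈ {u' | u ∈ (phiG E)^[1] {u'}}, ∀ᶠ N in atTop, ∀ k ≥ N, ∀ w,
      u' ∈ (phiG E)^[k] {w} → (phiG E)^[k + (i + 1)] {w} ⊆ M →
      ¬ ∀ n, v ∈ (phiG E)^[n] {w} → k + (i + 1) ≤ n := by
    intro u' hu'
    have hd := hcon u' hu'
    unfold DeepVertex at hd
    push Not at hd
    obtain ⟨N, hN⟩ := hd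
    filter_upwards [eventually_ge_atTop N] with N' hN' k hk w h1 h2 h3
    obtain ⟨n, hn, hlt⟩ := hN k (hN'.trans hk) w h1 h2
    exact absurd (h3 n hn) (by omega)
  obtain ⟨N, hN⟩ := ((eventually_all_finite (finite_inBall hLF 1 u)).2 hN).exists
  obtain ⟨k, hk, w, hu, hM, hmin⟩ := h (N + 1)
  obtain ⟨k, rfl⟩ : ∃ k', k = k' + 1 := ⟨k - 1, by omega⟩
  obtain ⟨u', hu', huu'⟩ := (mem_ball_add_iff k 1 w u).1 hu
  have he : k + 1 + i = k + (i + 1) := by omega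
  rw [he] at hM hmin
  exact hN u' huu' k (by omega) w hu' hM hmin

lemma deepVertex_self (hSC : StronglyConnectedGraph E) {M : Set V} {v x : V} (hx : x ∉ M)
    (h : ∀ r : ℕ, ∃ u, v ∈ (phiG E)^[r] {u} ∧ (phiG E)^[r] {u} ⊆ M) :
    DeepVertex E M v v 0 := by
  classical
  intro N
  obtain ⟨D, hD⟩ := hSC v x
  obtain ⟨u, hvu, hM⟩ := h (N + D)
  have hex : ∃ k, v ∈ (phiG E)^[k] {u} := ⟨_, hvu⟩
  refine ⟨Nat.find hex, ?_, u, Nat.find_spec hex,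
    (iterate_phiG_le (Nat.find_min' hex hvu) {u}).trans hM, fun n hn => Nat.find_min' hex hn⟩
  -- Otherwise `x` would lie within distance `N + D` of `u`.
  by_contra! hlt
  exact hx (hM (iterate_phiG_le (by omega) {u} (ball_subset_ball (Nat.find_spec hex) hD)))

lemma exists_busemannBall (hLF : LocallyFiniteGraph E) (hSC : StronglyConnectedGraph E)
    {M : Set V} {v x : V} (hx : x ∉ M)
    (h : ∀ r : ℕ, ∃ u, v ∈ (phiG E)^[r] {u} ∧ (phiG E)^[r] {u} ⊆ M) :
    ∃ B, IsBusemannBall E B ∧ v ∈ B ∧ B ⊆ M := by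
  choose! next hnext using fun (u : V) (i : ℕ) (hd : DeepVertex E M v u i) => hd.exists_step hLF
  let γ : ℕ → V := fun i => Nat.rec v (fun i u => next u i) i
  have hdeep : ∀ i, DeepVertex E M v (γ i) i := by
    intro i
    induction i with
    | zero => exact deepVertex_self hSC hx h
    | succ i ih => exact (hnext (γ i) i ih).2
  have hstep : ∀ i, γ i ∈ (phiG E)^[1] {γ (i + 1)} := fun i => (hnext (γ i) i (hdeep i)).1
  have hpath : ∀ d j, γ j ∈ (phiG E)^[d] {γ (j + d)} := by
    intro d j
    induction d with
    | zero => exact rfl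
    | succ d ih =>
      rw [add_comm d 1]
      have := ball_subset_ball (hstep (j + d)) ih
      rwa [show j + (1 + d) = j + d + 1 by omega]
  have hray : IsGeodesicRay E γ := by
    intro i j hij
    refine ⟨?_, fun n hn => ?_⟩
    · have := hpath (i - j) j
      rwa [Nat.add_sub_cancel' hij.le] at this
    · have h0 : v ∈ (phiG E)^[j] {γ j} := by
        have := hpath j 0
        rwa [Nat.zero_add] at this
      have := (hdeep i).le (ball_subset_ball hn h0)
      omega
  have hv : v ∈ ⋃ r : ℕ, (phiG E)^[r] {γ r} := mem_iUnion.2 ⟨0, rfl⟩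
  have hsub : ⋃ r : ℕ, (phiG E)^[r] {γ r} ⊆ M := iUnion_subset fun i => (hdeep i).ball_subset
  exact ⟨_, ⟨(nonempty_of_mem hv).ne_empty, fun hu => hx (hsub (hu ▸ mem_univ x)), γ, hray, rfl⟩,
    hv, hsub⟩

end Konig

/-- For a nonempty proper subset `M` of the vertex set of a countably infinite,
locally finite, strongly connected directed graph, the following are
equivalent: (1) `M` lies in the eventual image `⋂_{n ≥ 1} φ_G^n(𝒫(V))`;
(2) for every `r` there is `M' ⊆ M` with `M = φ_G^r(M')`;
(3) `M` is a union of horoballs; (4) `M` is a union of Busemann balls. -/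
theorem eventual_image_tfae {V : Type*} [Countable V] [Infinite V]
    (E : V → V → Prop) (hLF : LocallyFiniteGraph E)
    (hSC : StronglyConnectedGraph E)
    (M : Set V) (hne : M.Nonempty) (hMuniv : M ≠ univ) :
    List.TFAE
      [∀ n : ℕ, 1 ≤ n → ∃ W : Set V, (phiG E)^[n] W = M,
       ∀ r : ℕ, ∃ M' ⊆ M, M = (phiG E)^[r] M',
       ∃ 𝓢 : Set (Set V), (∀ H ∈ 𝓢, IsHoroball E H) ∧ M = ⋃₀ 𝓢,
       ∃ 𝓢 : Set (Set V), (∀ B ∈ 𝓢, IsBusemannBall E B) ∧ M = ⋃₀ 𝓢] := by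
  obtain ⟨x, hx⟩ := (ne_univ_iff_exists_notMem M).1 hMuniv
  tfae_have 1 → 2 := by
    intro h r
    rcases Nat.eq_zero_or_pos r with rfl | hr
    · exact ⟨M, Subset.rfl, rfl⟩
    · obtain ⟨W, rfl⟩ := h r hr
      exact ⟨W, iterate_phiG_le (Nat.zero_le r) W, rfl⟩
  tfae_have 2 → 1 := by
    intro h n _
    obtain ⟨W, -, hW⟩ := h n
    exact ⟨W, hW.symm⟩
  tfae_have 2 → 4 := by
    intro h
    refine ⟨{B | IsBusemannBall E B ∧ B ⊆ M}, fun B hB => hB.1, Subset.antisymm ?_ ?_⟩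
    · intro v hv
      obtain ⟨B, hB, hvB, hBM⟩ := exists_busemannBall hLF hSC hx
        fun r => (eq_iterate_iff r M).1 (h r) v hv
      exact ⟨B, ⟨hB, hBM⟩, hvB⟩
    · exact sUnion_subset fun B hB => hB.2
  tfae_have 4 → 3 := by
    rintro ⟨S, hS, hM⟩
    exact ⟨S, fun B hB => (hS B hB).isHoroball, hM⟩
  tfae_have 3 → 2 := by
    rintro ⟨S, hS, rfl⟩ r
    refine (eq_iterate_iff r _).2 fun v hv => ?_
    obtain ⟨H, hH, hvH⟩ := hv
    obtain ⟨u, hu, hs⟩ := (hS H hH).exists_ball_subset hLF r hvH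
    exact ⟨u, hu, hs.trans (subset_sUnion_of_mem hH)⟩
  tfae_finish
end

section
/- Let G be a countably infinite, locally finite, strongly connected directed graph. The sheltered sets of G satisfy: (a) ∅ and V(G) are sheltered; (b) the intersection of any family of sheltered sets is sheltered; (c) the union of an increasing chain of sheltered sets is sheltered. Moreover, for every W ⊆ V(G), the sheltered hull S_G(W) equals the intersection of all sheltered sets containing W. -/
/-!
`φ_G` commutes with unions and preserves finiteness, so `φ_G^r {v} ⊆ φ_G^r W` is already witnessed
by a finite subset of `W` (`exists_finite_of_mem_shelR`): the sheltered hull is a finitary operator.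
The hulls `S_G^r W` increase with `r`, so `S_G` is extensive. It is also idempotent: if
`v ∈ S_G^r F` with `F ⊆ S_G W` finite, then `F ⊆ S_G^R W` for a single `R`, hence
`v ∈ S_G^{r+R} W`. Thus `S_G` is a finitary closure operator fixing `∅`, and the four claims are
the standard properties of its closed sets.
-/

open Filter Set

/-- The `r`-sheltered hull of `W`. -/
def shelR {V : Type*} (E : V → V → Prop) (r : ℕ) (W : Set V) : Set V :=
  {v | (phiG E)^[r] {v} ⊆ (phiG E)^[r] W}

/-- The sheltered hull of `W`: the union of the `r`-sheltered hulls over `r ≥ 1`. -/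
def shelHull {V : Type*} (E : V → V → Prop) (W : Set V) : Set V :=
  ⋃ r ∈ {r : ℕ | 1 ≤ r}, shelR E r W

/-- A set is sheltered if it agrees with its sheltered hull. -/
def IsSheltered {V : Type*} (E : V → V → Prop) (W : Set V) : Prop :=
  shelHull E W = W

theorem mem_phiG_iterate {V : Type*} (E : V → V → Prop) (r : ℕ) (W : Set V) (v : V) :
    v ∈ (phiG E)^[r] W ↔ ∃ w ∈ W, v ∈ (phiG E)^[r] {w} := by
  induction r generalizing v with
  | zero => simp
  | succ r ih =>
    simp only [Function.iterate_succ_apply']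
    constructor
    · rintro (h | ⟨u, hu, huv⟩)
      · obtain ⟨w, hw, h⟩ := (ih v).1 h
        exact ⟨w, hw, Or.inl h⟩
      · obtain ⟨w, hw, h⟩ := (ih u).1 hu
        exact ⟨w, hw, Or.inr ⟨u, h, huv⟩⟩
    · rintro ⟨w, hw, h | ⟨u, hu, huv⟩⟩
      · exact Or.inl ((ih v).2 ⟨w, hw, h⟩)
      · exact Or.inr ⟨u, (ih u).2 ⟨w, hw, hu⟩, huv⟩

theorem phiG_iterate_mono {V : Type*} (E : V → V → Prop) (r : ℕ) {A B : Set V} (h : A ⊆ B) :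
    (phiG E)^[r] A ⊆ (phiG E)^[r] B := by
  intro v hv
  obtain ⟨w, hw, hv⟩ := (mem_phiG_iterate E r A v).1 hv
  exact (mem_phiG_iterate E r B v).2 ⟨w, h hw, hv⟩

theorem phiG_iterate_finite {V : Type*} {E : V → V → Prop} (hLF : LocallyFiniteGraph E)
    (r : ℕ) {A : Set V} (hA : A.Finite) : ((phiG E)^[r] A).Finite := by
  induction r with
  | zero => simpa using hA
  | succ r ih =>
    rw [Function.iterate_succ_apply']
    refine ih.union ((ih.biUnion fun w _ => (hLF w).1).subset ?_)
    rintro v ⟨w, hw, hwv⟩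
    exact mem_biUnion hw hwv

theorem subset_shelR {V : Type*} (E : V → V → Prop) (r : ℕ) (W : Set V) : W ⊆ shelR E r W :=
  fun _ hv => phiG_iterate_mono E r (singleton_subset_iff.2 hv)

theorem shelR_mono_right {V : Type*} (E : V → V → Prop) (r : ℕ) {A B : Set V} (h : A ⊆ B) :
    shelR E r A ⊆ shelR E r B :=
  fun _ hv => Subset.trans hv (phiG_iterate_mono E r h)

theorem phiG_iterate_shelR {V : Type*} (E : V → V → Prop) (r : ℕ) (W : Set V) :
    (phiG E)^[r] (shelR E r W) ⊆ (phiG E)^[r] W := by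
  intro v hv
  obtain ⟨w, hw, hv⟩ := (mem_phiG_iterate E r _ v).1 hv
  exact hw hv

theorem shelR_shelR {V : Type*} (E : V → V → Prop) (r R : ℕ) (W : Set V) :
    shelR E r (shelR E R W) ⊆ shelR E (R + r) W := by
  intro v hv
  -- The iterates commute: `φ^(R+r)` is `φ^R ∘ φ^r` for the first inclusion and `φ^r ∘ φ^R` for the
  -- second.
  have h₁ : (phiG E)^[R + r] {v} ⊆ (phiG E)^[R + r] (shelR E R W) := by
    simpa only [Function.iterate_add_apply] using phiG_iterate_mono E R hv
  have h₂ : (phiG E)^[r + R] (shelR E R W) ⊆ (phiG E)^[r + R] W := by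
    simpa only [Function.iterate_add_apply] using
      phiG_iterate_mono E r (phiG_iterate_shelR E R W)
  rw [add_comm r R] at h₂
  exact h₁.trans h₂

theorem shelR_mono_left {V : Type*} (E : V → V → Prop) (W : Set V) :
    Monotone fun r => shelR E r W := by
  intro r s hrs
  obtain ⟨k, rfl⟩ := Nat.exists_eq_add_of_le hrs
  exact (subset_shelR E k _).trans (shelR_shelR E k r W)

/-- Radius `0` may be allowed in the union defining the hull, as the `r`-hulls increase. -/
theorem shelHull_eq_iUnion {V : Type*} (E : V → V → Prop) (W : Set V) :
    shelHull E W = ⋃ r, shelR E r W := by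
  ext v
  simp only [shelHull, mem_iUnion, mem_ofPred_eq, exists_prop]
  exact ⟨fun ⟨r, _, h⟩ => ⟨r, h⟩,
    fun ⟨r, h⟩ => ⟨r + 1, by omega, shelR_mono_left E W (Nat.le_succ r) h⟩⟩

theorem subset_shelHull {V : Type*} (E : V → V → Prop) (W : Set V) : W ⊆ shelHull E W := by
  rw [shelHull_eq_iUnion]
  exact (subset_shelR E 0 W).trans (subset_iUnion (fun r => shelR E r W) 0)

theorem shelHull_mono {V : Type*} (E : V → V → Prop) {A B : Set V} (h : A ⊆ B) :
    shelHull E A ⊆ shelHull E B := by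
  simp only [shelHull_eq_iUnion]
  exact iUnion_mono fun r => shelR_mono_right E r h

/-- The sheltered hull is finitary: local finiteness makes `φ_G^r {v}` finite, and each of its
points needs only one vertex of `W`. -/
theorem exists_finite_of_mem_shelR {V : Type*} {E : V → V → Prop} (hLF : LocallyFiniteGraph E)
    {r : ℕ} {W : Set V} {v : V} (hv : v ∈ shelR E r W) :
    ∃ F ⊆ W, F.Finite ∧ v ∈ shelR E r F := by
  have h : ∀ u ∈ (phiG E)^[r] {v}, ∃ w ∈ W, u ∈ (phiG E)^[r] {w} :=
    fun u hu => (mem_phiG_iterate E r W u).1 (hv hu)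
  choose! f hfW hf using h
  refine ⟨f '' (phiG E)^[r] {v}, image_subset_iff.2 hfW,
    (phiG_iterate_finite hLF r (finite_singleton v)).image f, fun u hu => ?_⟩
  exact (mem_phiG_iterate E r _ u).2 ⟨f u, mem_image_of_mem f hu, hf u hu⟩

theorem isSheltered_shelHull {V : Type*} {E : V → V → Prop} (hLF : LocallyFiniteGraph E)
    (W : Set V) : IsSheltered E (shelHull E W) := by
  refine Subset.antisymm (fun v hv => ?_) (subset_shelHull E _)
  rw [shelHull_eq_iUnion] at hv
  obtain ⟨r, hv⟩ := mem_iUnion.1 hv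
  obtain ⟨F, hFW, hF, hv⟩ := exists_finite_of_mem_shelR hLF hv
  rw [shelHull_eq_iUnion] at hFW ⊢
  lift F to Finset V using hF
  obtain ⟨R, hR⟩ : ∃ R, (F : Set V) ⊆ shelR E R W :=
    Directed.exists_mem_subset_of_finset_subset_biUnion (shelR_mono_left E W).directed_le hFW
  exact mem_iUnion.2 ⟨R + r, shelR_shelR E r R W (shelR_mono_right E r hR hv)⟩

theorem isSheltered_sInter {V : Type*} (E : V → V → Prop) (𝓜 : Set (Set V))
    (h : ∀ W ∈ 𝓜, IsSheltered E W) : IsSheltered E (⋂₀ 𝓜) := by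
  refine Subset.antisymm (subset_sInter fun M hM => ?_) (subset_shelHull E _)
  calc shelHull E (⋂₀ 𝓜) ⊆ shelHull E M := shelHull_mono E (sInter_subset_of_mem hM)
    _ = M := h M hM

theorem isSheltered_empty {V : Type*} (E : V → V → Prop) : IsSheltered E (∅ : Set V) := by
  refine Subset.antisymm (fun v hv => ?_) (empty_subset _)
  rw [shelHull_eq_iUnion] at hv
  obtain ⟨r, hv⟩ := mem_iUnion.1 hv
  have hmem : ∀ s : ℕ, v ∈ (phiG E)^[s] {v} := by
    intro s
    induction s with
    | zero => simp
    | succ s ih =>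
      rw [Function.iterate_succ_apply']
      exact Or.inl ih
  obtain ⟨w, hw, _⟩ := (mem_phiG_iterate E r ∅ v).1 (hv (hmem r))
  exact hw

theorem isSheltered_sUnion {V : Type*} {E : V → V → Prop} (hLF : LocallyFiniteGraph E)
    (𝓒 : Set (Set V)) (hC : IsChain (· ⊆ ·) 𝓒) (h : ∀ W ∈ 𝓒, IsSheltered E W) :
    IsSheltered E (⋃₀ 𝓒) := by
  rcases 𝓒.eq_empty_or_nonempty with rfl | hne
  · simpa using isSheltered_empty E
  refine Subset.antisymm (fun v hv => ?_) (subset_shelHull E _)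
  rw [shelHull_eq_iUnion] at hv
  obtain ⟨r, hv⟩ := mem_iUnion.1 hv
  obtain ⟨F, hFC, hF, hv⟩ := exists_finite_of_mem_shelR hLF hv
  obtain ⟨M, hM, hFM⟩ : ∃ M ∈ 𝓒, F ⊆ M :=
    hC.directedOn.exists_mem_subset_of_finite_of_subset_sUnion hne hF hFC
  have hvM : v ∈ shelHull E M := by
    rw [shelHull_eq_iUnion]
    exact mem_iUnion.2 ⟨r, shelR_mono_right E r hFM hv⟩
  rw [h M hM] at hvM
  exact mem_sUnion_of_mem hvM hM

/-- The sheltered sets form an abstract convexity structure: `∅` and `V` are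
sheltered, arbitrary intersections of sheltered sets are sheltered, unions of
increasing chains of sheltered sets are sheltered, and the sheltered hull of a
set is the intersection of all sheltered sets containing it. -/
theorem sheltered_convexity_structure {V : Type*} [Countable V] [Infinite V]
    (E : V → V → Prop) (hLF : LocallyFiniteGraph E)
    (hSC : StronglyConnectedGraph E) :
    (IsSheltered E (∅ : Set V) ∧ IsSheltered E (univ : Set V)) ∧
    (∀ 𝓜 : Set (Set V), (∀ W ∈ 𝓜, IsSheltered E W) → IsSheltered E (⋂₀ 𝓜)) ∧
    (∀ 𝓒 : Set (Set V), IsChain (· ⊆ ·) 𝓒 → (∀ W ∈ 𝓒, IsSheltered E W) →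
      IsSheltered E (⋃₀ 𝓒)) ∧
    (∀ W : Set V, shelHull E W = ⋂₀ {M : Set V | IsSheltered E M ∧ W ⊆ M}) := by
  refine ⟨⟨isSheltered_empty E, ?_⟩, isSheltered_sInter E, isSheltered_sUnion hLF, fun W => ?_⟩
  · exact Subset.antisymm (subset_univ _) (subset_shelHull E _)
  · refine Subset.antisymm (subset_sInter ?_)
      (sInter_subset_of_mem ⟨isSheltered_shelHull hLF W, subset_shelHull E W⟩)
    rintro M ⟨hM, hWM⟩
    calc shelHull E W ⊆ shelHull E M := shelHull_mono E hWM
      _ = M := hM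
end

section
/- Let (Γ,A) be a finitely generated group. If (Γ,A) has only finitely many dead ends, then S_A(A^n) = A^n for all sufficiently large n. -/
/-!
If `n` bounds the length of every dead end, an element `v` outside the ball `A ^ n` is not a dead
end, so some generator moves it to an element of larger length, which again is not a dead end.
Iterating `r` times gives `x ∈ A ^ r` with `v * x ∉ A ^ (n + r)` (`exists_escape`). Since
`A ^ n * A ^ r = A ^ (n + r)`, this says that `v` is not in the `r`-sheltered hull of `A ^ n`.
-/

open Filter Set
open scoped Pointwise

/-- A finite subset `A` of a group positively generates it if every element is
a product of `n ≥ 1` elements of `A`. -/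
def PosGen {Γ : Type*} [Group Γ] (A : Set Γ) : Prop :=
  ∀ g : Γ, ∃ n : ℕ, 1 ≤ n ∧ g ∈ A ^ n

/-- The word length `|g|_A = min {n : g ∈ A^n}` (with `A^0 = {1}`). -/
noncomputable def wlen {Γ : Type*} [Group Γ] (A : Set Γ) (g : Γ) : ℕ :=
  sInf {n : ℕ | g ∈ A ^ n}

/-- `g` is a dead end of depth at least `n` for `(Γ, A)` if `g A^n ⊆ A^{|g|_A}`. -/
def IsDeadEndDepth {Γ : Type*} [Group Γ] (A : Set Γ) (g : Γ) (n : ℕ) : Prop :=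
  {g} * A ^ n ⊆ A ^ wlen A g

/-- The `r`-sheltered hull of `W` with respect to `A`:
`S_A^r(W) = {v : v A^r ⊆ W A^r}`. -/
def shelRA {Γ : Type*} [Group Γ] (A : Set Γ) (r : ℕ) (W : Set Γ) : Set Γ :=
  {v | {v} * A ^ r ⊆ W * A ^ r}

/-- The sheltered hull `S_A(W) = ⋃_{r ≥ 1} S_A^r(W)`. -/
def shelHullA {Γ : Type*} [Group Γ] (A : Set Γ) (W : Set Γ) : Set Γ :=
  ⋃ r ∈ {r : ℕ | 1 ≤ r}, shelRA A r W

/-- If no dead end is longer than `n`, an element outside `A ^ n` can be pushed away from the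
identity, gaining at least one unit of length at each step. -/
theorem exists_escape {Γ : Type*} [Group Γ] {A : Set Γ} (hone : (1 : Γ) ∈ A) (hgen : PosGen A)
    (n : ℕ) (hn : ∀ g, IsDeadEndDepth A g 1 → wlen A g ≤ n) {v : Γ} (hv : v ∉ A ^ n) (r : ℕ) :
    ∃ x ∈ A ^ r, v * x ∉ A ^ (n + r) := by
  induction r with
  | zero => exact ⟨1, by simp, by simpa using hv⟩
  | succ r ih =>
    obtain ⟨x, hx, hvx⟩ := ih
    have hmem : v * x ∈ A ^ wlen A (v * x) := by
      obtain ⟨k, -, hk⟩ := hgen (v * x)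
      exact Nat.sInf_mem (s := {k : ℕ | v * x ∈ A ^ k}) ⟨k, hk⟩
    have hlt : n + r < wlen A (v * x) := by
      by_contra! hle
      exact hvx (pow_subset_pow_right hone hle hmem)
    have hnot : ¬ IsDeadEndDepth A (v * x) 1 := fun h => by
      have := hn _ h
      omega
    obtain ⟨y, hy, hy'⟩ := not_subset.1 hnot
    rw [pow_one] at hy
    obtain ⟨w, rfl, a, ha, rfl⟩ := hy
    refine ⟨x * a, ?_, fun h => hy' (pow_subset_pow_right hone hlt ?_)⟩
    · rw [pow_succ]
      exact mul_mem_mul hx ha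
    · simpa [mul_assoc, add_assoc] using h

/-- If `(Γ, A)` has only finitely many dead ends, then `S_A(A^n) = A^n` for
all sufficiently large `n`. -/
theorem shelHull_eq_of_finitely_many_dead_ends {Γ : Type*} [Group Γ]
    [Countable Γ] [Infinite Γ]
    (A : Set Γ) (hfin : A.Finite) (hone : (1 : Γ) ∈ A) (hgen : PosGen A)
    (hDE : {g : Γ | IsDeadEndDepth A g 1}.Finite) :
    ∃ N : ℕ, ∀ n : ℕ, N ≤ n → shelHullA A (A ^ n) = A ^ n := by
  obtain ⟨N, hN⟩ := (hDE.image (wlen A)).bddAbove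
  refine ⟨N, fun n hn => Subset.antisymm ?_ ?_⟩
  · intro v hv
    simp only [shelHullA, shelRA, mem_iUnion, mem_ofPred_eq] at hv
    obtain ⟨r, -, hr⟩ := hv
    by_contra hvn
    obtain ⟨x, hx, hvx⟩ := exists_escape hone hgen n
      (fun g hg => (hN ⟨g, hg, rfl⟩).trans hn) hvn r
    apply hvx
    rw [pow_add]
    exact hr (mul_mem_mul rfl hx)
  · intro v hv
    simp only [shelHullA, shelRA, mem_iUnion, mem_ofPred_eq]
    exact ⟨1, le_rfl, mul_subset_mul_right (singleton_subset_iff.2 hv)⟩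
end

section
/- Let (Γ,A) be a finitely generated group and let q ∈ ℕ satisfy A^{-1} ⊆ A^q. Let M be a finite nonempty subset of Γ and let k ≥ 1 with M ⊆ A^k. Then for every r ∈ ℕ with r ≥ 1: |φ_A^{r-1}(M)| ≤ L_A^{(q+1)rk}(φ_A^r(M)) ≤ |S_A^{(q+1)rk}(φ_A^r(M))|. -/
/-!
Put `P = M A^(r-1)`, `n = k + r - 1` and `K = (q+1) r k`, so that `φ_A^r(M) = P A`, `P ⊆ A^n`
and `(q+1) n ≤ K`.

Upper bound: every `N` with `N A^K = P A A^K` is contained in the sheltered hull, which is finite,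
so there are at most `2 ^ |S|` such sets.

Lower bound: the "shell" `P A \ P` alone already satisfies `(P A \ P) A^K = P A A^K`
(`shell_mul_pow`), so the sets `T ∪ (P A \ P)`, for `T ⊆ P`, are `2 ^ |P|` distinct members of the
family. A point of `P A A^K` outside `P` is covered because a path from `P` to it crosses the shell
(`exists_exit`). A point `x ∈ P` is covered because a path can leave `P` from `x` and come back in
`(q+1) n` steps (`mem_shell_mul_pow`): if `x A^n ⊄ P`, leave in at most `n` steps and return in
`q n`. Otherwise `x A^n = P = A^n` by counting, and it suffices to leave `A^n` from `1` and come
back. For `q ≤ n`, leaving takes `n + 1` steps and returning takes `q (n + 1) ≤ (q+1) n`. For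
`q > n`, either `A⁻¹ ⊆ A^n`, and returning takes `n (n + 1)` steps, or some `c ∈ A` has
`c⁻¹ ∉ A^n`, and the closed path of length `q + 1` spelling `c⁻¹ c` leaves `A^n`.
-/

open Filter Set
open scoped Pointwise

/-- The Minkowski product map `φ_A(W) = W A`. -/
def phiA {Γ : Type*} [Group Γ] (A : Set Γ) (W : Set Γ) : Set Γ := W * A

/-- `L_A^k(M) = log₂ |{N ⊆ Γ : N A^k = M A^k}|`. -/
noncomputable def LA {Γ : Type*} [Group Γ] (A : Set Γ) (k : ℕ) (M : Set Γ) : ℝ :=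
  Real.logb 2 ({N : Set Γ | N * A ^ k = M * A ^ k}.ncard)

section

variable {Γ : Type*} [Group Γ] {A : Set Γ}

lemma finite_pow (hfin : A.Finite) (n : ℕ) : (A ^ n).Finite := by
  induction n with
  | zero => simp
  | succ n ih =>
    rw [pow_succ]
    exact ih.mul hfin

lemma phiA_iterate (A M : Set Γ) (r : ℕ) : (phiA A)^[r] M = M * A ^ r := by
  induction r with
  | zero => simp
  | succ r ih => rw [Function.iterate_succ_apply', ih, phiA, pow_succ, mul_assoc]

lemma inv_mem_pow_of_mem_pow {m : ℕ} (h : A⁻¹ ⊆ A ^ m) {t : ℕ} {u : Γ} (hu : u ∈ A ^ t) :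
    u⁻¹ ∈ A ^ (m * t) := by
  have h1 : u⁻¹ ∈ (A⁻¹) ^ t := by
    rw [inv_pow]
    exact Set.inv_mem_inv.2 hu
  rw [pow_mul]
  exact Set.pow_subset_pow_left h h1

/-- A path of length at most `t + 1` starting in `P` and ending outside `P` passes through
`P A \ P`, with at most `t` steps remaining after its first point outside `P`. -/
lemma exists_exit (hone : (1 : Γ) ∈ A) (P : Set Γ) (t : ℕ) :
    ∀ x ∈ P, ∀ y ∈ A ^ (t + 1), x * y ∉ P →
      ∃ u ∈ A ^ (t + 1), ∃ v ∈ A ^ t, y = u * v ∧ x * u ∈ (P * A) \ P := by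
  induction t with
  | zero =>
    intro x hx y hy hxy
    refine ⟨y, hy, 1, by simp, by simp, ?_, hxy⟩
    exact Set.mul_mem_mul hx (by simpa using hy)
  | succ t ih =>
    intro x hx y hy hxy
    rw [pow_succ'] at hy
    obtain ⟨a, ha, y', hy', rfl⟩ := Set.mem_mul.1 hy
    by_cases hxa : x * a ∈ P
    · obtain ⟨u, hu, v, hv, rfl, hs⟩ := ih (x * a) hxa y' hy' (by rwa [mul_assoc])
      refine ⟨a * u, ?_, v, ?_, by rw [mul_assoc], by rwa [← mul_assoc]⟩
      · rw [pow_succ']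
        exact Set.mul_mem_mul ha hu
      · exact Set.pow_subset_pow_right hone (Nat.le_succ t) hv
    · exact ⟨a, Set.subset_pow hone (by omega) ha, y', hy', rfl, Set.mul_mem_mul hx ha, hxa⟩

lemma pow_mul_not_subset [Infinite Γ] (hfin : A.Finite) (hgen : PosGen A) (n : ℕ)
    (hone : (1 : Γ) ∈ A) : ¬ A ^ n * A ⊆ A ^ n := by
  intro h
  have key : ∀ m : ℕ, A ^ m ⊆ A ^ n := by
    intro m
    induction m with
    | zero => simpa using Set.one_mem_pow hone
    | succ m ih =>
      rw [pow_succ]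
      exact (Set.mul_subset_mul_right ih).trans h
  have hu : (A ^ n : Set Γ) = Set.univ := by
    rw [Set.eq_univ_iff_forall]
    intro g
    obtain ⟨m, -, hm⟩ := hgen g
    exact key m hm
  exact Set.infinite_univ (hu ▸ finite_pow hfin n)

/-- Starting from `x ∈ P ⊆ A^n`, a path can visit `P A \ P` and then return to `x` within
`(q + 1) n` steps. -/
lemma mem_shell_mul_pow [Infinite Γ] (hfin : A.Finite) (hone : (1 : Γ) ∈ A) (hgen : PosGen A)
    {q : ℕ} (hq : A⁻¹ ⊆ A ^ q) {P : Set Γ} {n : ℕ} (hn : 1 ≤ n) (hP : P ⊆ A ^ n)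
    {x : Γ} (hx : x ∈ P) : x ∈ ((P * A) \ P) * A ^ ((q + 1) * n) := by
  have hAn : (A ^ n).Finite := finite_pow hfin n
  -- It is enough to find a step `u` from `x` into the shell whose inverse is short.
  have reduce : ∀ u m, x * u ∈ (P * A) \ P → u⁻¹ ∈ A ^ m → m ≤ (q + 1) * n →
      x ∈ ((P * A) \ P) * A ^ ((q + 1) * n) := by
    intro u m hu hm hle
    exact Set.mem_mul.2 ⟨x * u, hu, u⁻¹, Set.pow_subset_pow_right hone hle hm, by group⟩
  by_cases hex : ∃ y ∈ A ^ n, x * y ∉ P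
  · obtain ⟨y, hy, hxy⟩ := hex
    obtain ⟨t, rfl⟩ : ∃ t, n = t + 1 := ⟨n - 1, by omega⟩
    obtain ⟨u, hu, -, -, -, hs⟩ := exists_exit hone P t x hx y hy hxy
    exact reduce u _ hs (inv_mem_pow_of_mem_pow hq hu) (by gcongr; omega)
  push Not at hex
  have hsub : x • A ^ n ⊆ P := by
    rintro _ ⟨y, hy, rfl⟩
    exact hex y hy
  have hPeq : x • A ^ n = P := by
    refine Set.eq_of_subset_of_ncard_le hsub ?_ (hAn.subset hP)
    rw [Set.ncard_smul_set]
    exact Set.ncard_le_ncard hP hAn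
  have shift : ∀ u ∈ (A ^ n * A) \ A ^ n, x * u ∈ (P * A) \ P := by
    rintro u ⟨hu, hu'⟩
    rw [← hPeq]
    refine ⟨?_, ?_⟩
    · rw [smul_mul_assoc]
      exact Set.smul_mem_smul_set hu
    · rwa [← smul_eq_mul, Set.smul_mem_smul_set_iff]
  obtain ⟨b, hb, hb'⟩ := Set.not_subset.1 (pow_mul_not_subset hfin hgen n hone)
  have hb1 : b ∈ A ^ (n + 1) := by rwa [pow_succ]
  rcases le_or_gt q n with hqn | hqn
  · exact reduce b _ (shift b ⟨hb, hb'⟩) (inv_mem_pow_of_mem_pow hq hb1) (by nlinarith)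
  by_cases hinv : A⁻¹ ⊆ A ^ n
  · exact reduce b _ (shift b ⟨hb, hb'⟩) (inv_mem_pow_of_mem_pow hinv hb1) (by nlinarith)
  obtain ⟨c, hc, hcn⟩ := Set.not_subset.1 hinv
  obtain ⟨t, rfl⟩ : ∃ t, q = t + 1 := ⟨q - 1, by omega⟩
  obtain ⟨u, -, v, hv, huv, hs⟩ := exists_exit hone (A ^ n) t 1 (Set.one_mem_pow hone) c (hq hc)
    (by rwa [one_mul])
  rw [one_mul] at hs
  -- Here `c ∈ A⁻¹ \ A^n` and `c = u v`. Since `u v c⁻¹ = 1` is the closed path,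
  -- `u⁻¹ = v c⁻¹` with `c⁻¹ ∈ A`.
  refine reduce u (t + 1) (shift u hs) ?_ (by nlinarith)
  have : u⁻¹ = v * c⁻¹ := by rw [huv]; group
  rw [this, pow_succ]
  exact Set.mul_mem_mul hv hc

/-- The shell `P A \ P` has the same `K`-fold thickening as `P A`. -/
lemma shell_mul_pow [Infinite Γ] (hfin : A.Finite) (hone : (1 : Γ) ∈ A) (hgen : PosGen A)
    {q : ℕ} (hq : A⁻¹ ⊆ A ^ q) {P : Set Γ} {n : ℕ} (hn : 1 ≤ n) (hP : P ⊆ A ^ n)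
    {K : ℕ} (hK : (q + 1) * n ≤ K) : P * A * A ^ K ⊆ ((P * A) \ P) * A ^ K := by
  intro z hz
  by_cases hzP : z ∈ P
  · exact Set.mul_subset_mul_left (Set.pow_subset_pow_right hone hK)
      (mem_shell_mul_pow hfin hone hgen hq hn hP hzP)
  rw [mul_assoc, ← pow_succ'] at hz
  obtain ⟨p, hp, y, hy, rfl⟩ := Set.mem_mul.1 hz
  obtain ⟨u, -, v, hv, rfl, hs⟩ := exists_exit hone P K p hp y hy hzP
  rw [← mul_assoc]
  exact Set.mul_mem_mul hs hv

lemma subset_shelRA {K : ℕ} {W N : Set Γ} (h : N * A ^ K = W * A ^ K) : N ⊆ shelRA A K W := by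
  intro v hv
  change {v} * A ^ K ⊆ W * A ^ K
  rw [← h]
  exact Set.mul_subset_mul_right (Set.singleton_subset_iff.2 hv)

lemma shelRA_finite (hfin : A.Finite) (hone : (1 : Γ) ∈ A) (K : ℕ) {W : Set Γ} (hW : W.Finite) :
    (shelRA A K W).Finite := by
  refine (hW.mul (finite_pow hfin K)).subset fun v hv => hv ?_
  simpa using Set.mul_mem_mul (Set.mem_singleton v) (Set.one_mem_pow hone (n := K))

end

/-- For finite nonempty `M ⊆ A^k` and `r ≥ 1`:
`|φ_A^{r-1}(M)| ≤ L_A^{(q+1)rk}(φ_A^r(M)) ≤ |S_A^{(q+1)rk}(φ_A^r(M))|`. -/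
theorem card_le_LA_le_card_shel {Γ : Type*} [Group Γ] [Countable Γ] [Infinite Γ]
    (A : Set Γ) (hfin : A.Finite) (hone : (1 : Γ) ∈ A) (hgen : PosGen A)
    (q : ℕ) (hq : A⁻¹ ⊆ A ^ q)
    (M : Set Γ) (hMfin : M.Finite) (hMne : M.Nonempty)
    (k : ℕ) (hk : 1 ≤ k) (hMk : M ⊆ A ^ k)
    (r : ℕ) (hr : 1 ≤ r) :
    (((phiA A)^[r - 1] M).ncard : ℝ) ≤
        LA A ((q + 1) * r * k) ((phiA A)^[r] M) ∧
      LA A ((q + 1) * r * k) ((phiA A)^[r] M) ≤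
        ((shelRA A ((q + 1) * r * k) ((phiA A)^[r] M)).ncard : ℝ) := by
  obtain ⟨s, rfl⟩ : ∃ s, r = s + 1 := ⟨r - 1, by omega⟩
  rw [Nat.add_sub_cancel, Function.iterate_succ_apply', phiA_iterate]
  have hPfin : (M * A ^ s).Finite := hMfin.mul (finite_pow hfin s)
  have hP : M * A ^ s ⊆ A ^ (k + s) := by
    rw [pow_add]
    exact Set.mul_subset_mul_right hMk
  have hK : (q + 1) * (k + s) ≤ (q + 1) * (s + 1) * k := by
    rw [mul_assoc]
    gcongr
    nlinarith
  generalize (q + 1) * (s + 1) * k = K at hK ⊢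
  generalize M * A ^ s = P at hPfin hP ⊢
  change _ ≤ LA A K (P * A) ∧ LA A K (P * A) ≤ ((shelRA A K (P * A)).ncard : ℝ)
  have hSfin := shelRA_finite hfin hone K (hPfin.mul hfin)
  have hsub : {N : Set Γ | N * A ^ K = P * A * A ^ K} ⊆ 𝒫 (shelRA A K (P * A)) :=
    fun N hN => subset_shelRA hN
  have hpow : (𝒫 (shelRA A K (P * A))).Finite := hSfin.finite_subsets
  have hLfin := hpow.subset hsub
  have hpos : (0 : ℝ) < ({N : Set Γ | N * A ^ K = P * A * A ^ K}.ncard : ℝ) := by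
    exact_mod_cast (Set.ncard_pos hLfin).2 ⟨P * A, rfl⟩
  constructor
  · rw [LA, Real.le_logb_iff_rpow_le one_lt_two hpos, Real.rpow_natCast]
    have hcard : (𝒫 P).ncard ≤ {N : Set Γ | N * A ^ K = P * A * A ^ K}.ncard := by
      refine Set.ncard_le_ncard_of_injOn (fun T => T ∪ ((P * A) \ P)) ?_ ?_ hLfin
      · intro T hT
        refine Set.Subset.antisymm (Set.mul_subset_mul_right ?_) ?_
        · exact Set.union_subset (hT.trans (Set.subset_mul_left P hone)) Set.sdiff_subset
        · exact (shell_mul_pow hfin hone hgen hq (by omega) hP hK).trans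
            (Set.mul_subset_mul_right Set.subset_union_right)
      · -- `T` is recovered from `T ∪ (P A \ P)` by intersecting with `P`.
        intro T hT T' hT' h
        have hT1 : T ⊆ P := hT
        have hT2 : T' ⊆ P := hT'
        ext z
        have hz := Set.ext_iff.1 h z
        have h1 := @hT1 z
        have h2 := @hT2 z
        simp only [Set.mem_union, Set.mem_sdiff] at hz
        tauto
    rw [Set.ncard_powerset P hPfin] at hcard
    exact_mod_cast hcard
  · rw [LA, Real.logb_le_iff_le_rpow one_lt_two hpos, Real.rpow_natCast]
    have hcard := Set.ncard_le_ncard hsub hpow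
    rw [Set.ncard_powerset _ hSfin] at hcard
    exact_mod_cast hcard
end

section
/- Let A₁ ⊆ ℤ^{d₁} and A₂ ⊆ ℤ^{d₂} be finite positively generating sets, both containing 0. If φ_{A₁} : 𝒫(ℤ^{d₁}) → 𝒫(ℤ^{d₁}) and φ_{A₂} : 𝒫(ℤ^{d₂}) → 𝒫(ℤ^{d₂}) are topologically conjugate, then d₁ = d₂ and the d₁-dimensional Lebesgue volume of conv(A₁) equals the d₂-dimensional Lebesgue volume of conv(A₂). -/
/-!
The proof uses only that the conjugacy `Φ` is a bijection intertwining the two maps; continuity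
plays no role. Say that `W` and `V` merge after `n` steps if `W + n • A = V + n • A`; the map `Φ`
preserves this relation, so it preserves the cardinality of merging classes.

* `Q = Φ {0}` is finite. Only finitely many sets merge with `{0} + A₁` after `n` steps, whereas for
  infinite `Q` there is an `n` such that deleting any one point of `Q` from `Q + A₂` produces a set
  that merges with `Q + A₂` after `n` steps (`exists_infinite_fiber`, `conj_singleton_finite`).
* Every set between `{m a : a ∈ A₁}` and `m • A₁` merges with `m • A₁` after `m |A₁|` steps, by
  pigeonhole (`nsmul_add_subset`). So at least `2 ^ (|m • A₁| - |A₁|)` sets merge with `m • A₁`.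
* The image of `m • A₁` is `Q + m • A₂`, and by cancellation every set merging with it is contained
  in `(m + C) • A₂`, where `C` is independent of `m` (`exists_cancel`).

Hence `|m • A₁| ≤ |(m + C) • A₂| + |A₁|` (`exists_ncard_le`). Since `m • A` and the lattice points
of `m • conv A` agree up to a bounded shift in `m`, the cardinality `|m • A|` grows like
`vol(conv A) m ^ d`, with `vol(conv A) > 0`. This inequality and its analogue for `Φ⁻¹` give
`d₁ = d₂` and the equality of volumes.
-/

open Filter Set MeasureTheory
open scoped Pointwise

/-- The product (cylinder) topology on `𝒫(V) ≅ {0,1}^V`. -/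
noncomputable def cylTop (V : Type*) : TopologicalSpace (Set V) :=
  TopologicalSpace.induced
    (fun (S : Set V) (v : V) => @decide (v ∈ S) (Classical.propDecidable _))
    inferInstance

/-- Topological conjugacy of two self-maps with respect to given topologies. -/
def TopConj {X Y : Type*} (tX : TopologicalSpace X) (tY : TopologicalSpace Y)
    (f : X → X) (g : Y → Y) : Prop :=
  ∃ Φ : X ≃ Y, @Continuous _ _ tX tY Φ ∧ @Continuous _ _ tY tX Φ.symm ∧
    ∀ x : X, Φ (f x) = g (Φ x)

/-- `A ⊆ ℤ^d` is positively generating: every point is in some `n`-fold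
Minkowski sum `nA`, `n ≥ 1`. -/
def PosGenZ {d : ℕ} (A : Set (Fin d → ℤ)) : Prop :=
  ∀ g : Fin d → ℤ, ∃ n : ℕ, 1 ≤ n ∧ g ∈ n • A

/-- The canonical embedding `ℤ^d → ℝ^d`. -/
def coeR {d : ℕ} : (Fin d → ℤ) → (Fin d → ℝ) := fun x i => (x i : ℝ)

/-! ### Iterated sumsets and dilated convex hulls -/

lemma iterate_add_set {d : ℕ} (A : Set (Fin d → ℤ)) (n : ℕ) (W : Set (Fin d → ℤ)) :
    (fun W => W + A)^[n] W = W + n • A := by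
  induction n generalizing W with
  | zero => simp
  | succ n ih =>
    rw [Function.iterate_succ_apply, ih, succ_nsmul', add_assoc]

lemma finite_nsmul_set {d : ℕ} {A : Set (Fin d → ℤ)} (hA : A.Finite) (n : ℕ) :
    (n • A).Finite := by
  induction n with
  | zero => simp
  | succ n ih => rw [succ_nsmul]; exact ih.add hA

/-- Elements of `n • A` are nonnegative integer combinations of total weight `n`. -/
lemma exists_weights {d : ℕ} (A : Finset (Fin d → ℤ)) (n : ℕ) (x : Fin d → ℤ)
    (hx : x ∈ n • (A : Set (Fin d → ℤ))) :
    ∃ c : (Fin d → ℤ) → ℕ, ∑ a ∈ A, c a = n ∧ ∑ a ∈ A, c a • a = x := by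
  classical
  induction n generalizing x with
  | zero => exact ⟨0, by simp, by simpa [eq_comm] using hx⟩
  | succ n ih =>
    rw [succ_nsmul] at hx
    obtain ⟨y, hy, b, hb, rfl⟩ := hx
    obtain ⟨c, hc, hcy⟩ := ih y hy
    have hb' : b ∈ A := hb
    refine ⟨fun a => c a + if a = b then 1 else 0, ?_, ?_⟩
    · simp [Finset.sum_add_distrib, hc, hb']
    · simp only [add_smul, Finset.sum_add_distrib, hcy, ite_smul, one_smul, zero_smul]
      simp [hb']

lemma sum_weights_mem {d : ℕ} (A : Set (Fin d → ℤ)) (S : Finset (Fin d → ℤ))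
    (hS : ∀ a ∈ S, a ∈ A) (c : (Fin d → ℤ) → ℕ) :
    ∑ a ∈ S, c a • a ∈ (∑ a ∈ S, c a) • A := by
  classical
  induction S using Finset.induction_on with
  | empty => simp
  | insert b S hb ih =>
    rw [Finset.sum_insert hb, Finset.sum_insert hb, add_nsmul]
    exact Set.add_mem_add (Set.nsmul_mem_nsmul (hS b (by simp)))
      (ih fun a ha => hS a (by simp [ha]))

lemma exists_subset_nsmul {d : ℕ} {A : Set (Fin d → ℤ)} (h0 : (0 : Fin d → ℤ) ∈ A)
    (hgen : PosGenZ A) {S : Set (Fin d → ℤ)} (hS : S.Finite) : ∃ C : ℕ, S ⊆ C • A := by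
  induction S, hS using Set.Finite.induction_on with
  | empty => exact ⟨0, by simp⟩
  | @insert a S _ _ ih =>
    obtain ⟨C, hC⟩ := ih
    obtain ⟨n, -, hn⟩ := hgen a
    refine ⟨max C n, Set.insert_subset ?_ ?_⟩
    · exact Set.nsmul_subset_nsmul_right h0 (le_max_right _ _) hn
    · exact hC.trans (Set.nsmul_subset_nsmul_right h0 (le_max_left _ _))

lemma coeR_add {d : ℕ} (x y : Fin d → ℤ) : coeR (x + y) = coeR x + coeR y := by
  ext i; simp [coeR]

lemma coeR_injective {d : ℕ} : Function.Injective (coeR (d := d)) := by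
  intro x y h
  ext i
  have := congrFun h i
  simpa [coeR] using this

lemma coeR_mem_smul_convexHull {d : ℕ} {A : Set (Fin d → ℤ)} (h0 : (0 : Fin d → ℤ) ∈ A)
    (n : ℕ) (x : Fin d → ℤ) (hx : x ∈ n • A) :
    coeR x ∈ (n : ℝ) • convexHull ℝ (coeR '' A) := by
  induction n generalizing x with
  | zero =>
    have : x = 0 := by simpa using hx
    subst this
    refine ⟨coeR 0, subset_convexHull ℝ _ ⟨0, h0, rfl⟩, ?_⟩
    ext i; simp [coeR]
  | succ n ih =>
    rw [succ_nsmul] at hx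
    obtain ⟨y, hy, b, hb, rfl⟩ := hx
    rw [Nat.cast_succ, (convex_convexHull ℝ _).add_smul (by positivity) zero_le_one, one_smul]
    rw [show (fun x1 x2 : Fin d → ℤ => x1 + x2) y b = y + b from rfl, coeR_add]
    exact Set.add_mem_add (ih y hy) (subset_convexHull ℝ _ ⟨b, hb, rfl⟩)

/-- Lattice points of the dilate `m • conv A` lie in `(m + C) • A`, with `C` independent of `m`:
rounding down the coefficients of a convex combination leaves a remainder in a fixed
bounded set, and `A` is positively generating. -/
lemma exists_mem_nsmul_of_mem_convexHull {d : ℕ} {A : Set (Fin d → ℤ)} (hfin : A.Finite)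
    (h0 : (0 : Fin d → ℤ) ∈ A) (hgen : PosGenZ A) :
    ∃ C : ℕ, ∀ (m : ℕ) (x : Fin d → ℤ),
      coeR x ∈ (m : ℝ) • convexHull ℝ (coeR '' A) → x ∈ (m + C) • A := by
  classical
  lift A to Finset (Fin d → ℤ) using hfin
  set B : Fin d → ℤ := fun i => ∑ a ∈ A, |a i| with hB
  obtain ⟨C, hC⟩ := exists_subset_nsmul h0 hgen (Set.finite_Icc (-B) B)
  refine ⟨C, fun m x hx => ?_⟩
  obtain ⟨y, hy, hyx⟩ := hx
  rw [← Finset.coe_image, Finset.mem_convexHull'] at hy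
  obtain ⟨w, hw0, hw1, hwy⟩ := hy
  rw [Finset.sum_image (fun a _ b _ h => coeR_injective h)] at hw1 hwy
  have hw0' : ∀ a ∈ A, 0 ≤ (m : ℝ) * w (coeR a) := fun a ha =>
    mul_nonneg (by positivity) (hw0 _ (Finset.mem_image_of_mem _ ha))
  set c : (Fin d → ℤ) → ℕ := fun a => ⌊(m : ℝ) * w (coeR a)⌋₊ with hc
  have hcsum : ∑ a ∈ A, c a ≤ m := by
    have : ((∑ a ∈ A, c a : ℕ) : ℝ) ≤ m := by
      push_cast
      calc ∑ a ∈ A, (c a : ℝ) ≤ ∑ a ∈ A, (m : ℝ) * w (coeR a) :=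
            Finset.sum_le_sum fun a ha => Nat.floor_le (hw0' a ha)
        _ = m := by rw [← Finset.mul_sum, hw1, mul_one]
    exact_mod_cast this
  have hint : ∑ a ∈ A, c a • a ∈ m • (A : Set (Fin d → ℤ)) :=
    Set.nsmul_subset_nsmul_right h0 hcsum (sum_weights_mem _ A (fun a ha => ha) c)
  have hrem : ∀ i, |(x - ∑ a ∈ A, c a • a) i| ≤ B i := by
    intro i
    have hxi : (x i : ℝ) = ∑ a ∈ A, (m : ℝ) * w (coeR a) * (a i : ℝ) := by
      have := congrFun hyx i
      simp only [← hwy] at this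
      simp only [Pi.smul_apply, Finset.sum_apply, smul_eq_mul, coeR, Finset.mul_sum] at this
      rw [← this]
      exact Finset.sum_congr rfl fun a _ => by rw [mul_assoc]
    have : ((|(x - ∑ a ∈ A, c a • a) i| : ℤ) : ℝ) ≤ (B i : ℤ) := by
      simp only [Pi.sub_apply, Finset.sum_apply, Pi.smul_apply, hB]
      push_cast
      simp only [nsmul_eq_mul, Int.cast_mul, Int.cast_natCast]
      rw [hxi, ← Finset.sum_sub_distrib]
      refine (Finset.abs_sum_le_sum_abs _ _).trans (Finset.sum_le_sum fun a ha => ?_)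
      rw [← sub_mul, abs_mul]
      refine mul_le_of_le_one_left (abs_nonneg _) ?_
      have h1 := Nat.floor_le (hw0' a ha)
      have h2 := Nat.lt_floor_add_one ((m : ℝ) * w (coeR a))
      rw [abs_le]
      constructor <;> simp only [hc] <;> linarith
    exact_mod_cast this
  have hmem : x - ∑ a ∈ A, c a • a ∈ C • (A : Set (Fin d → ℤ)) :=
    hC ⟨fun i => (abs_le.mp (hrem i)).1, fun i => (abs_le.mp (hrem i)).2⟩
  rw [add_nsmul]
  exact ⟨_, hint, _, hmem, by simp⟩

/-- Cancellation in Minkowski sums: if `w + n • A ⊆ (r + n) • A`, iterating the inclusion gives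
`(n + 1) • w ∈ ((n + 1) (r + 1)) • A`, so `w` is a lattice point of `(r + 1) • conv A`. -/
lemma exists_cancel {d : ℕ} {A : Set (Fin d → ℤ)} (hfin : A.Finite)
    (h0 : (0 : Fin d → ℤ) ∈ A) (hgen : PosGenZ A) :
    ∃ C : ℕ, ∀ (r n : ℕ) (w : Fin d → ℤ),
      (∀ y ∈ n • A, w + y ∈ (r + n) • A) → w ∈ (r + C) • A := by
  obtain ⟨C, hC⟩ := exists_mem_nsmul_of_mem_convexHull hfin h0 hgen
  refine ⟨1 + C, fun r n w hw => ?_⟩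
  have hiter : ∀ j : ℕ, ∀ y ∈ n • A, j • w + y ∈ (j * r + n) • A := by
    intro j
    induction j with
    | zero => simp
    | succ j ih =>
      intro y hy
      have h1 := hw y hy
      rw [add_nsmul] at h1
      obtain ⟨u, hu, v, hv, huv⟩ := h1
      have h2 : u + (j • w + v) ∈ r • A + (j * r + n) • A := Set.add_mem_add hu (ih v hv)
      rw [← add_nsmul] at h2
      have huv' : u + v = w + y := huv
      have h3 : (j + 1) • w + y = u + (j • w + v) := by
        rw [succ_nsmul, add_assoc, ← huv']; abel
      rw [h3, show (j + 1) * r + n = r + (j * r + n) by ring]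
      exact h2
  -- The factor `n + 1` rather than `n` keeps the scaling factor invertible when `n = 0`.
  have h1 : (n + 1) • w ∈ ((n + 1) * (r + 1)) • A := by
    have := hiter (n + 1) 0 (Set.nsmul_subset_nsmul_right h0 (Nat.zero_le n) (by simp))
    rw [add_zero] at this
    exact Set.nsmul_subset_nsmul_right h0 (by nlinarith) this
  have h2 := coeR_mem_smul_convexHull h0 _ _ h1
  rw [← add_assoc]
  refine hC (r + 1) w ?_
  obtain ⟨k, hk, hkw⟩ := h2
  refine ⟨k, hk, ?_⟩
  ext i
  have := congrFun hkw i
  simp [coeR] at this ⊢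
  have hn : (n : ℝ) + 1 ≠ 0 := by positivity
  apply mul_left_cancel₀ hn
  linarith

/-- The sparse set `m * A` of dilated generators already generates `(m + n) • A` from `n • A`
once `n = m * |A|`: by pigeonhole some generator has weight at least `m`. -/
lemma nsmul_add_subset {d : ℕ} {A : Set (Fin d → ℤ)} (hfin : A.Finite) (hne : A.Nonempty)
    (m : ℕ) :
    (m + m * A.ncard) • A ⊆ (fun a => m • a) '' A + (m * A.ncard) • A := by
  classical
  lift A to Finset (Fin d → ℤ) using hfin
  rw [Set.ncard_coe_finset]
  intro x hx
  obtain ⟨c, hc, rfl⟩ := exists_weights A _ x hx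
  obtain ⟨b, hb, hcb⟩ : ∃ b ∈ A, m ≤ c b := by
    refine Finset.exists_le_of_sum_le hne (f := fun _ => m) ?_
    simp only [Finset.sum_const, smul_eq_mul, hc]
    rw [mul_comm]; omega
  refine ⟨m • b, ⟨b, hb, rfl⟩, ∑ a ∈ A, (c a - if a = b then m else 0) • a, ?_, ?_⟩
  · convert sum_weights_mem (A : Set (Fin d → ℤ)) A (fun a ha => ha)
      (fun a => c a - if a = b then m else 0) using 2
    have : ∑ a ∈ A, (c a - if a = b then m else 0) + ∑ a ∈ A, (if a = b then m else 0)
        = ∑ a ∈ A, c a := by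
      rw [← Finset.sum_add_distrib]
      refine Finset.sum_congr rfl fun a _ => ?_
      split_ifs with h
      · subst h; omega
      · rfl
    simp [hb] at this
    omega
  · have : m • b = ∑ a ∈ A, (if a = b then m else 0) • a := by simp [hb, ite_smul]
    simp only [this]
    rw [← Finset.sum_add_distrib]
    refine Finset.sum_congr rfl fun a _ => ?_
    rw [← add_smul]
    congr 1
    split_ifs with h
    · subst h; omega
    · simp

/-! ### Merging classes and conjugacies -/

/-- Two sets merge after `n` steps if and only if their images under a conjugacy do. -/
lemma add_nsmul_eq_iff_of_conj {d₁ d₂ : ℕ} {A₁ : Set (Fin d₁ → ℤ)} {A₂ : Set (Fin d₂ → ℤ)}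
    (Φ : Set (Fin d₁ → ℤ) ≃ Set (Fin d₂ → ℤ)) (hΦ : ∀ W, Φ (W + A₁) = Φ W + A₂)
    (n : ℕ) (V W : Set (Fin d₁ → ℤ)) :
    Φ W + n • A₂ = Φ V + n • A₂ ↔ W + n • A₁ = V + n • A₁ := by
  have h : ∀ U, Φ (U + n • A₁) = Φ U + n • A₂ := by
    intro U
    rw [← iterate_add_set, ← iterate_add_set]
    exact (Function.Semiconj.iterate_right (f := Φ) (ga := fun W => W + A₁)
      (gb := fun W => W + A₂) hΦ n) U
  rw [← h, ← h, Φ.injective.eq_iff]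

/-- For infinite `Q`, some merging class of `Q + A` is infinite: for a suitable fixed `n`, deleting
any single point of `Q` from `Q + A` does not change the `n`-th image. -/
lemma exists_infinite_fiber {d : ℕ} {A : Set (Fin d → ℤ)} (h0 : (0 : Fin d → ℤ) ∈ A)
    (hgen : PosGenZ A) {Q : Set (Fin d → ℤ)} (hQ : Q.Infinite) :
    ∃ n : ℕ, {W : Set (Fin d → ℤ) | W + n • A = (Q + A) + n • A}.Infinite := by
  obtain ⟨b, hbA, hb⟩ : ∃ b ∈ A, b ≠ 0 := by
    by_contra! h
    have hA : A = {0} := Set.eq_singleton_iff_unique_mem.mpr ⟨h0, h⟩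
    refine hQ (Set.Finite.subset (Set.finite_singleton 0) fun q _ => ?_)
    obtain ⟨n, -, hn⟩ := hgen q
    rw [hA] at hn
    simpa using hn
  obtain ⟨n, -, hn⟩ := hgen (-b)
  have h0n : (0 : Fin d → ℤ) ∈ n • A :=
    Set.nsmul_subset_nsmul_right h0 (Nat.zero_le n) (by simp)
  -- Every element of `n • A` can be reached by a nonzero first step followed by `n` more.
  have key : ∀ k ≤ n, ∀ x ∈ k • A, ∃ y ∈ A, y ≠ 0 ∧ ∃ z ∈ n • A, y + z = x := by
    intro k
    induction k with
    | zero =>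
      intro _ x hx
      have : x = 0 := by simpa using hx
      exact ⟨b, hbA, hb, -b, hn, by simp [this]⟩
    | succ k ih =>
      intro hk x hx
      rw [succ_nsmul] at hx
      obtain ⟨u, hu, a, ha, rfl⟩ := hx
      by_cases ha0 : a = 0
      · simpa [ha0] using ih (by omega) u hu
      · exact ⟨a, ha, ha0, u, Set.nsmul_subset_nsmul_right h0 (by omega) hu, add_comm _ _⟩
  refine ⟨n, Set.infinite_of_injOn_mapsTo (f := fun q => (Q + A) \ {q}) ?_ ?_ hQ⟩
  · intro p hp q hq hpq
    by_contra hne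
    have hp' : p ∈ (Q + A) \ {q} := ⟨⟨p, hp, 0, h0, add_zero p⟩, hne⟩
    rw [← show (Q + A) \ {p} = (Q + A) \ {q} from hpq] at hp'
    exact hp'.2 rfl
  · intro q hq
    refine Set.Subset.antisymm (Set.add_subset_add_right Set.sdiff_subset) ?_
    rintro _ ⟨v, hv, x, hx, rfl⟩
    by_cases hvq : v = q
    · subst hvq
      obtain ⟨y, hy, hy0, z, hz, rfl⟩ := key n le_rfl x hx
      exact ⟨v + y, ⟨⟨v, hq, y, hy, rfl⟩, by simpa using hy0⟩, z, hz, add_assoc _ _ _⟩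
    · exact ⟨v, ⟨hv, hvq⟩, x, hx, rfl⟩

/-- The image of the singleton `{0}` under a conjugacy is finite, because the sets merging with
the finite set `A₁` after `n` steps are finitely many for every `n`. -/
lemma conj_singleton_finite {d₁ d₂ : ℕ} {A₁ : Set (Fin d₁ → ℤ)} {A₂ : Set (Fin d₂ → ℤ)}
    (hfin₁ : A₁.Finite) (h0₁ : (0 : Fin d₁ → ℤ) ∈ A₁)
    (h0₂ : (0 : Fin d₂ → ℤ) ∈ A₂) (hgen₂ : PosGenZ A₂)
    (Φ : Set (Fin d₁ → ℤ) ≃ Set (Fin d₂ → ℤ)) (hΦ : ∀ W, Φ (W + A₁) = Φ W + A₂) :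
    (Φ {0}).Finite := by
  by_contra hQ
  obtain ⟨n, hn⟩ := exists_infinite_fiber h0₂ hgen₂ hQ
  refine hn ?_
  have h0n : (0 : Fin d₁ → ℤ) ∈ n • A₁ :=
    Set.nsmul_subset_nsmul_right h0₁ (Nat.zero_le n) (by simp)
  have hF : {W : Set (Fin d₁ → ℤ) | W + n • A₁ = ({0} + A₁) + n • A₁}.Finite := by
    refine ((((Set.finite_singleton 0).add hfin₁).add
      (finite_nsmul_set hfin₁ n)).finite_subsets).subset fun W hW => ?_
    rw [← show W + n • A₁ = ({0} + A₁) + n • A₁ from hW]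
    exact fun w hw => ⟨w, hw, 0, h0n, add_zero w⟩
  refine (hF.image Φ).subset fun W hW => ⟨Φ.symm W, ?_, by simp⟩
  rw [Set.mem_ofPred_eq, ← add_nsmul_eq_iff_of_conj Φ hΦ, hΦ, Φ.apply_symm_apply]
  exact hW

/-- The counting inequality. The merging class of `m • A₁` contains every set between the sparse
set `m * A₁` and `m • A₁`, while all members of its image consist of points of
`(m + C) • A₂`. -/
lemma exists_ncard_le {d₁ d₂ : ℕ} {A₁ : Set (Fin d₁ → ℤ)} {A₂ : Set (Fin d₂ → ℤ)}
    (hfin₁ : A₁.Finite) (h0₁ : (0 : Fin d₁ → ℤ) ∈ A₁)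
    (hfin₂ : A₂.Finite) (h0₂ : (0 : Fin d₂ → ℤ) ∈ A₂) (hgen₂ : PosGenZ A₂)
    (Φ : Set (Fin d₁ → ℤ) ≃ Set (Fin d₂ → ℤ)) (hΦ : ∀ W, Φ (W + A₁) = Φ W + A₂) :
    ∃ C : ℕ, ∀ m : ℕ, (m • A₁).ncard ≤ ((m + C) • A₂).ncard + A₁.ncard := by
  obtain ⟨c, hc⟩ := exists_subset_nsmul h0₂ hgen₂
    (conj_singleton_finite hfin₁ h0₁ h0₂ hgen₂ Φ hΦ)
  obtain ⟨C, hC⟩ := exists_cancel hfin₂ h0₂ hgen₂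
  refine ⟨c + C, fun m => ?_⟩
  set n := m * A₁.ncard with hn
  set D : Set (Fin d₁ → ℤ) := (fun a => m • a) '' A₁ with hD
  have hDm : D ⊆ m • A₁ := by
    rintro _ ⟨a, ha, rfl⟩
    exact Set.nsmul_mem_nsmul ha
  have hDcard : D.ncard ≤ A₁.ncard := Set.ncard_image_le hfin₁
  have hclass : ∀ S ⊆ m • A₁, D ∪ S + n • A₁ = m • A₁ + n • A₁ := by
    intro S hS
    refine Set.Subset.antisymm (Set.add_subset_add_right (Set.union_subset hDm hS)) ?_
    rw [← add_nsmul]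
    exact (nsmul_add_subset hfin₁ ⟨0, h0₁⟩ m).trans
      (Set.add_subset_add_right Set.subset_union_left)
  have hΦm : Φ (m • A₁) = Φ {0} + m • A₂ := by
    have h : ∀ k : ℕ, Φ (k • A₁) = Φ {0} + k • A₂ := by
      intro k
      induction k with
      | zero => simp [← Set.singleton_zero]
      | succ k ih => rw [succ_nsmul, hΦ, ih, succ_nsmul, add_assoc]
    exact h m
  have hmaps : ∀ S ⊆ m • A₁, Φ (D ∪ S) ⊆ (m + (c + C)) • A₂ := by
    intro S hS w hw
    have h1 := (add_nsmul_eq_iff_of_conj Φ hΦ n _ _).mpr (hclass S hS)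
    rw [hΦm] at h1
    rw [← add_assoc]
    refine hC (m + c) n w fun y hy => ?_
    have h2 : w + y ∈ Φ {0} + m • A₂ + n • A₂ := h1 ▸ Set.add_mem_add hw hy
    rw [add_comm m c, add_nsmul, add_nsmul]
    exact Set.add_subset_add_right (Set.add_subset_add_right hc) h2
  have hfinm := finite_nsmul_set hfin₁ m
  have hfin' := finite_nsmul_set hfin₂ (m + (c + C))
  have hcard : (𝒫 (m • A₁ \ D)).ncard ≤ (𝒫 ((m + (c + C)) • A₂)).ncard := by
    refine Set.ncard_le_ncard_of_injOn (fun S => Φ (D ∪ S))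
      (fun S hS => hmaps S (Set.Subset.trans hS Set.sdiff_subset)) ?_ hfin'.finite_subsets
    intro S hS T hT hST
    have h1 : D ∪ S = D ∪ T := Φ.injective hST
    have hS' : Disjoint D S := Set.disjoint_left.mpr fun x hx hxS => (hS hxS).2 hx
    have hT' : Disjoint D T := Set.disjoint_left.mpr fun x hx hxT => (hT hxT).2 hx
    have h2 := congrArg (fun U => U \ D) h1
    simpa [Set.union_sdiff_left, hS'.symm.sdiff_eq_left, hT'.symm.sdiff_eq_left] using h2
  rw [Set.ncard_powerset _ (hfinm.subset Set.sdiff_subset), Set.ncard_powerset _ hfin'] at hcard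
  have h3 := (Nat.pow_le_pow_iff_right (by norm_num)).mp hcard
  have h4 := Set.ncard_sdiff_add_ncard_of_subset hDm hfinm
  omega

/-! ### Lattice point asymptotics -/

/-- The number of lattice points in the dilate `m • conv A`. -/
noncomputable def latticeCount {d : ℕ} (A : Set (Fin d → ℤ)) (m : ℕ) : ℕ :=
  {x : Fin d → ℤ | coeR x ∈ (m : ℝ) • convexHull ℝ (coeR '' A)}.ncard

lemma latticeCount_finite {d : ℕ} {A : Set (Fin d → ℤ)} (hfin : A.Finite)
    (h0 : (0 : Fin d → ℤ) ∈ A) (hgen : PosGenZ A) (m : ℕ) :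
    {x : Fin d → ℤ | coeR x ∈ (m : ℝ) • convexHull ℝ (coeR '' A)}.Finite := by
  obtain ⟨C, hC⟩ := exists_mem_nsmul_of_mem_convexHull hfin h0 hgen
  exact (finite_nsmul_set hfin (m + C)).subset fun x hx => hC m x hx

lemma ncard_nsmul_le_latticeCount {d : ℕ} {A : Set (Fin d → ℤ)} (hfin : A.Finite)
    (h0 : (0 : Fin d → ℤ) ∈ A) (hgen : PosGenZ A) (m : ℕ) :
    (m • A).ncard ≤ latticeCount A m :=
  Set.ncard_le_ncard (fun x hx => coeR_mem_smul_convexHull h0 m x hx)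
    (latticeCount_finite hfin h0 hgen m)

lemma tendsto_latticeCount {d : ℕ} {A : Set (Fin d → ℤ)} (hfin : A.Finite) :
    Tendsto (fun m : ℕ => (latticeCount A m : ℝ) / (m : ℝ) ^ d) atTop
      (nhds (volume.real (convexHull ℝ (coeR '' A)))) := by
  have hcpt : IsCompact (convexHull ℝ (coeR '' A)) := (hfin.image coeR).isCompact_convexHull ℝ
  have h := tendsto_card_div_pow_atTop_volume (convexHull ℝ (coeR '' A)) hcpt.isBounded
    hcpt.measurableSet ((convex_convexHull ℝ _).addHaar_frontier volume)
  rw [Fintype.card_fin] at h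
  refine h.congr' ?_
  filter_upwards [eventually_ge_atTop 1] with m hm
  have hm0 : (m : ℝ) ≠ 0 := by positivity
  congr 2
  rw [latticeCount, ← Set.ncard_image_of_injective _
    (f := fun x : Fin d → ℤ => (m : ℝ)⁻¹ • coeR x)
    (fun x y hxy => coeR_injective (smul_right_injective _ (inv_ne_zero hm0) hxy)),
    Nat.card_coe_set_eq]
  congr 1
  ext x
  constructor
  · rintro ⟨hx, y, hy, rfl⟩
    rw [SetLike.mem_coe, Module.Basis.mem_span_iff_repr_mem] at hy
    choose z hz using hy
    have hzy : coeR z = y := by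
      ext i
      simpa [coeR] using hz i
    refine ⟨z, ⟨_, hx, ?_⟩, by simp [hzy]⟩
    simp [hzy, smul_smul, hm0]
  · rintro ⟨z, ⟨k, hk, hkz⟩, rfl⟩
    refine ⟨?_, coeR z, ?_, rfl⟩
    · have : (m : ℝ)⁻¹ • coeR z = k := by
        rw [← hkz]; simp [smul_smul, hm0]
      simpa [this] using hk
    · rw [SetLike.mem_coe, Module.Basis.mem_span_iff_repr_mem]
      intro i
      exact ⟨z i, by simp [coeR]⟩

/-- `conv A` has positive volume: some `n • A` contains the unit cube `{0, 1}^d`, so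
`(k (n + 1)) • A` contains at least `k ^ d` points. -/
lemma volume_convexHull_pos {d : ℕ} {A : Set (Fin d → ℤ)} (hfin : A.Finite)
    (h0 : (0 : Fin d → ℤ) ∈ A) (hgen : PosGenZ A) :
    0 < volume.real (convexHull ℝ (coeR '' A)) := by
  obtain ⟨n, hn⟩ := exists_subset_nsmul h0 hgen (Set.finite_Icc (0 : Fin d → ℤ) 1)
  have hbox : ∀ k : ℕ, Set.Icc (0 : Fin d → ℤ) (fun _ => (k : ℤ)) ⊆ (k * (n + 1)) • A := by
    intro k
    induction k with
    | zero =>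
      intro x hx
      have : x = 0 := le_antisymm (fun i => by simpa using hx.2 i) hx.1
      simp [this]
    | succ k ih =>
      intro x hx
      rw [add_mul, add_nsmul, one_mul]
      refine ⟨fun i => min (x i) k, ih ⟨fun i => ?_, fun i => ?_⟩,
        fun i => x i - min (x i) k,
        Set.nsmul_subset_nsmul_right h0 (Nat.le_succ n) (hn ⟨fun i => ?_, fun i => ?_⟩), ?_⟩
      · exact le_min (hx.1 i) (by simp)
      · exact min_le_right _ _
      · simp
      · have := hx.2 i
        simp only [Pi.one_apply, Nat.cast_succ] at this ⊢
        omega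
      · ext i; simp
  have hcount : ∀ k : ℕ, k ^ d ≤ latticeCount A (k * (n + 1)) := by
    intro k
    refine le_trans ?_ (ncard_nsmul_le_latticeCount hfin h0 hgen _)
    refine le_trans ?_ (Set.ncard_le_ncard (hbox k) (finite_nsmul_set hfin _))
    rw [← Finset.coe_Icc, Set.ncard_coe_finset, Pi.card_Icc]
    simp only [Pi.zero_apply, Int.card_Icc, Finset.prod_const, Finset.card_univ, Fintype.card_fin]
    exact Nat.pow_le_pow_left (by omega) d
  have hlim := (tendsto_latticeCount hfin).comp
    (tendsto_id.atTop_mul_const' (show 0 < n + 1 by omega))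
  have hpos : (0 : ℝ) < (((n : ℝ) + 1) ^ d)⁻¹ := by positivity
  refine hpos.trans_le (ge_of_tendsto hlim ?_)
  filter_upwards [eventually_ge_atTop 1] with k hk
  have hk0 : (0 : ℝ) < k := by positivity
  simp only [Function.comp_apply, id]
  rw [le_div_iff₀ (by positivity)]
  push_cast
  rw [mul_pow, mul_comm, mul_assoc, mul_inv_cancel₀ (by positivity), mul_one]
  exact_mod_cast hcount k

lemma exists_latticeCount_le {d₁ d₂ : ℕ} {A₁ : Set (Fin d₁ → ℤ)} {A₂ : Set (Fin d₂ → ℤ)}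
    (hfin₁ : A₁.Finite) (h0₁ : (0 : Fin d₁ → ℤ) ∈ A₁) (hgen₁ : PosGenZ A₁)
    (hfin₂ : A₂.Finite) (h0₂ : (0 : Fin d₂ → ℤ) ∈ A₂) (hgen₂ : PosGenZ A₂)
    (Φ : Set (Fin d₁ → ℤ) ≃ Set (Fin d₂ → ℤ)) (hΦ : ∀ W, Φ (W + A₁) = Φ W + A₂) :
    ∃ C B : ℕ, ∀ m : ℕ, latticeCount A₁ m ≤ latticeCount A₂ (m + C) + B := by
  obtain ⟨C₁, hC₁⟩ := exists_mem_nsmul_of_mem_convexHull hfin₁ h0₁ hgen₁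
  obtain ⟨C, hC⟩ := exists_ncard_le hfin₁ h0₁ hfin₂ h0₂ hgen₂ Φ hΦ
  refine ⟨C₁ + C, A₁.ncard, fun m => ?_⟩
  calc latticeCount A₁ m ≤ ((m + C₁) • A₁).ncard :=
        Set.ncard_le_ncard (fun x hx => hC₁ m x hx) (finite_nsmul_set hfin₁ _)
    _ ≤ ((m + C₁ + C) • A₂).ncard + A₁.ncard := hC _
    _ ≤ _ := by
      rw [← add_assoc]
      exact Nat.add_le_add_right (ncard_nsmul_le_latticeCount hfin₂ h0₂ hgen₂ _) _

/-- Comparison of polynomial growth rates up to a bounded shift and a bounded error. -/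
lemma growth_comparison {f₁ f₂ : ℕ → ℕ} {d₁ d₂ : ℕ} {v₁ v₂ : ℝ} (hv₁ : 0 < v₁)
    (h₁ : Tendsto (fun m : ℕ => (f₁ m : ℝ) / (m : ℝ) ^ d₁) atTop (nhds v₁))
    (h₂ : Tendsto (fun m : ℕ => (f₂ m : ℝ) / (m : ℝ) ^ d₂) atTop (nhds v₂))
    {C B : ℕ} (h : ∀ m, f₁ m ≤ f₂ (m + C) + B) :
    d₁ ≤ d₂ ∧ (d₁ = d₂ → 0 < d₁ → v₁ ≤ v₂) := by
  have hpow : ∀ k : ℕ, 0 < k → Tendsto (fun m : ℕ => ((m : ℝ) ^ k)⁻¹) atTop (nhds 0) :=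
    fun k hk => tendsto_inv_atTop_zero.comp
      ((tendsto_pow_atTop hk.ne').comp tendsto_natCast_atTop_atTop)
  have hratio : Tendsto (fun m : ℕ => ((m + C : ℕ) : ℝ) / (m : ℝ)) atTop (nhds 1) := by
    have : Tendsto (fun m : ℕ => 1 + (C : ℝ) * ((m : ℝ) ^ 1)⁻¹) atTop (nhds (1 + C * 0)) :=
      ((hpow 1 one_pos).const_mul _).const_add 1
    rw [mul_zero, add_zero] at this
    refine this.congr' ?_
    filter_upwards [eventually_ge_atTop 1] with m hm
    have hm0 : (m : ℝ) ≠ 0 := by positivity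
    push_cast
    field_simp
  have hshift : Tendsto (fun m : ℕ => (f₂ (m + C) : ℝ) / (m : ℝ) ^ d₂) atTop (nhds v₂) := by
    have := (h₂.comp (tendsto_add_atTop_nat C)).mul (hratio.pow d₂)
    rw [one_pow, mul_one] at this
    refine this.congr' ?_
    filter_upwards [eventually_ge_atTop 1] with m hm
    have hm0 : (m : ℝ) ≠ 0 := by positivity
    have hm1 : ((m + C : ℕ) : ℝ) ≠ 0 := by positivity
    simp only [Function.comp_apply, div_pow]
    field_simp
  constructor
  · by_contra! hlt
    have hlim : Tendsto (fun m : ℕ => (f₂ (m + C) : ℝ) / (m : ℝ) ^ d₂ * ((m : ℝ) ^ (d₁ - d₂))⁻¹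
        + B * ((m : ℝ) ^ d₁)⁻¹) atTop (nhds (v₂ * 0 + B * 0)) :=
      (hshift.mul (hpow _ (by omega))).add ((hpow _ (by omega)).const_mul _)
    have hle := le_of_tendsto_of_tendsto h₁ hlim (by
      filter_upwards [eventually_ge_atTop 1] with m hm
      have hm0 : (m : ℝ) ≠ 0 := by positivity
      have hsplit : (m : ℝ) ^ d₁ = (m : ℝ) ^ d₂ * (m : ℝ) ^ (d₁ - d₂) := by
        rw [← pow_add]; congr 1; omega
      have hm' : (f₁ m : ℝ) ≤ f₂ (m + C) + B := by exact_mod_cast h m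
      calc (f₁ m : ℝ) / (m : ℝ) ^ d₁ ≤ (f₂ (m + C) + B) / (m : ℝ) ^ d₁ := by gcongr
        _ = _ := by
          rw [add_div, div_eq_mul_inv (B : ℝ), hsplit, ← div_div,
            div_eq_mul_inv _ ((m : ℝ) ^ (d₁ - d₂))])
    linarith
  · rintro rfl hd
    have hlim : Tendsto (fun m : ℕ => (f₂ (m + C) : ℝ) / (m : ℝ) ^ d₁
        + B * ((m : ℝ) ^ d₁)⁻¹) atTop (nhds (v₂ + B * 0)) :=
      hshift.add ((hpow _ hd).const_mul _)
    have hle := le_of_tendsto_of_tendsto h₁ hlim (by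
      filter_upwards with m
      have hm' : (f₁ m : ℝ) ≤ f₂ (m + C) + B := by exact_mod_cast h m
      calc (f₁ m : ℝ) / (m : ℝ) ^ d₁ ≤ (f₂ (m + C) + B) / (m : ℝ) ^ d₁ := by gcongr
        _ = _ := by rw [add_div, div_eq_mul_inv (B : ℝ)])
    linarith

/-- If the Minkowski sum maps `φ_{A₁} : 𝒫(ℤ^{d₁}) → 𝒫(ℤ^{d₁})` and
`φ_{A₂} : 𝒫(ℤ^{d₂}) → 𝒫(ℤ^{d₂})` are topologically conjugate, then `d₁ = d₂`
and the convex hulls of `A₁` and `A₂` have the same Lebesgue volume. -/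
theorem dim_and_volume_of_topConj {d₁ d₂ : ℕ}
    (A₁ : Set (Fin d₁ → ℤ)) (hfin₁ : A₁.Finite) (h0₁ : (0 : Fin d₁ → ℤ) ∈ A₁)
    (hgen₁ : PosGenZ A₁)
    (A₂ : Set (Fin d₂ → ℤ)) (hfin₂ : A₂.Finite) (h0₂ : (0 : Fin d₂ → ℤ) ∈ A₂)
    (hgen₂ : PosGenZ A₂)
    (hconj : TopConj (cylTop (Fin d₁ → ℤ)) (cylTop (Fin d₂ → ℤ))
      (fun W => W + A₁) (fun W => W + A₂)) :
    d₁ = d₂ ∧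
      volume (convexHull ℝ (coeR '' A₁)) = volume (convexHull ℝ (coeR '' A₂)) := by

  obtain ⟨Φ, -, -, hΦ⟩ := hconj
  have hΦ' : ∀ W, Φ.symm (W + A₂) = Φ.symm W + A₁ := fun W => by
    rw [Equiv.symm_apply_eq]
    simpa using (hΦ (Φ.symm W)).symm
  obtain ⟨C, B, h⟩ := exists_latticeCount_le hfin₁ h0₁ hgen₁ hfin₂ h0₂ hgen₂ Φ hΦ
  obtain ⟨C', B', h'⟩ := exists_latticeCount_le hfin₂ h0₂ hgen₂ hfin₁ h0₁ hgen₁ Φ.symm hΦ'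
  have g := growth_comparison (volume_convexHull_pos hfin₁ h0₁ hgen₁)
    (tendsto_latticeCount hfin₁) (tendsto_latticeCount hfin₂) h
  have g' := growth_comparison (volume_convexHull_pos hfin₂ h0₂ hgen₂)
    (tendsto_latticeCount hfin₂) (tendsto_latticeCount hfin₁) h'
  obtain rfl : d₁ = d₂ := le_antisymm g.1 g'.1
  refine ⟨rfl, ?_⟩
  rcases Nat.eq_zero_or_pos d₁ with rfl | hd
  -- In dimension zero the bounded error is not negligible, but there both sets equal `{0}`.
  · rw [Subsingleton.eq_univ_of_nonempty ⟨0, h0₁⟩, Subsingleton.eq_univ_of_nonempty ⟨0, h0₂⟩]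
  · have hreal := le_antisymm (g.2 rfl hd) (g'.2 rfl hd)
    rwa [measureReal_eq_measureReal_iff
      ((hfin₁.image coeR).isCompact_convexHull ℝ).measure_ne_top
      ((hfin₂.image coeR).isCompact_convexHull ℝ).measure_ne_top] at hreal
end
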